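/- arXiv:2605.14669 — 9 statements merged into one kernel-verified Lean document; each statement's English description precedes it below -/
import Mathlib

section
/- Fix a real α ≥ 1 and θ ∈ (0, π). Define T_θ(φ) := [Θ_{1/α}(φ)^{2α} · (1 + Θ_{1/α}(φ)² − 2·Θ_{1/α}(φ)·cos((π−φ)/(1+α)))] / [Θ_{1/α}(φ)^{2α} − 2·Θ_{1/α}(θ)^α·Θ_α(θ)·Θ_{1/α}(φ)^α·cos((π−φ)/(1+1/α)) + Θ_{1/α}(θ)^{2α}·Θ_α(θ)²] for φ ∈ (0, π). Then T_θ is strictly increasing on the interval (0, θ) and strictly decreasing on the interval (θ, π). -/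
open Real Filter Set Topology

/-- `Th α t = sin t / ((1+α)·sin((π−t)/(1+α)))`; `Th (1/α)` is `Θ_{1/α}`. -/
noncomputable def Th (α t : ℝ) : ℝ :=
  Real.sin t / ((1 + α) * Real.sin ((Real.pi - t) / (1 + α)))

/-- The squared modulus `T_θ(φ) = |e^{f_θ(φ)}|²`. -/
noncomputable def T (α θ φ : ℝ) : ℝ :=
  ((Th (1/α) φ) ^ (2*α) *
      (1 + (Th (1/α) φ)^2 - 2 * Th (1/α) φ * Real.cos ((Real.pi - φ) / (1 + α)))) /
  ((Th (1/α) φ) ^ (2*α) -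
      2 * (Th (1/α) θ) ^ α * Th α θ * (Th (1/α) φ) ^ α * Real.cos ((Real.pi - φ) / (1 + 1/α)) +
    (Th (1/α) θ) ^ (2*α) * (Th α θ)^2)


lemma key1 (p q x y C S : ℝ) (hp : p ≠ 0) (hq : q ≠ 0) (h1 : q = 1 - p) (hxy : x + y ≠ 0)
  (hC : C = 1 - (p/q) * (x*y-1)/(1+y^2)) (hS : S = (p/q) * (x+y)/(1+y^2)) :
  ((p*x-q*y)*C+S)*(C^2+S^2) + (p/q)/(1+y^2)*(x+y)*((((x*y-1)/(x+y)) - q^2*y-p^2*x)/p)*((S^2-C^2)*y+2*C*S) = 0 := by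
  have hy : 1+y^2 ≠ 0 := by positivity
  subst hC hS
  field_simp
  subst h1
  ring

lemma key3 (p q x y C S : ℝ) (hp : p ≠ 0) (hq : q ≠ 0) (h1 : q = 1 - p) (hxy : x + y ≠ 0)
  (hC : C = 1 - (p/q) * (x*y-1)/(1+y^2)) (hS : S = (p/q) * (x+y)/(1+y^2)) :
  (q/p)*((x*y-1)/(x+y)-q*y)*(C^2+S^2)^2 + ((p*x-q*y)*C+S)*(C^2+S^2) + ((((x*y-1)/(x+y)) - q^2*y-p^2*x)/p)*(S^2-C^2)/q = 0 := by
  have hy : 1+y^2 ≠ 0 := by positivity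
  subst hC hS
  field_simp
  subst h1
  ring

lemma key2 (p q x y C S : ℝ) (hp : p ≠ 0) (hq : q ≠ 0) (h1 : q = 1 - p) (hxy : x + y ≠ 0)
  (hC : C = 1 - (p/q) * (x*y-1)/(1+y^2)) (hS : S = (p/q) * (x+y)/(1+y^2)) :
  ((q/p)*((x*y-1)/(x+y)-q*y)*y+q)*(C^2+S^2)^2 + 2*y*((p*x-q*y)*C+S)*(C^2+S^2) + ((((x*y-1)/(x+y)) - q^2*y-p^2*x)/p)*((S^2-C^2)*y+2*C*S+p*(x+y)*(S^2-C^2))/q = 0 := by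
  have hy : 1+y^2 ≠ 0 := by positivity
  subst hC hS
  field_simp
  subst h1
  ring

lemma g_aux {l s : ℝ} (hl : 0 < l) (hl1 : l < 1) (hs : 0 < s) (hs' : s ≤ π) :
    cos s * sin (l*s) < l * cos (l*s) * sin s := by
  have h : StrictMonoOn (fun s => l * cos (l*s) * sin s - cos s * sin (l*s)) (Icc 0 π) := by
    apply strictMonoOn_of_deriv_pos (convex_Icc _ _) (by fun_prop)
    intro t ht
    rw [interior_Icc] at ht
    have h1 : HasDerivAt (fun s => l*s) (l*1) t := (hasDerivAt_id t).const_mul l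
    have h2 := ((h1.cos.const_mul l).mul (hasDerivAt_sin t)).sub ((hasDerivAt_cos t).mul h1.sin)
    have : (fun s => l * cos (l*s) * sin s - cos s * sin (l*s)) = (((fun y ↦ l * cos (l * y)) * sin) - (cos * fun x ↦ sin (l * x))) := by
      ext; simp
    rw [this, h2.deriv]
    have e1 : 0 < sin t := sin_pos_of_pos_of_lt_pi ht.1 ht.2
    have e2 : 0 < sin (l*t) := sin_pos_of_pos_of_lt_pi (by have := ht.1; positivity) (by nlinarith [ht.1, ht.2])
    have : 0 < (1-l^2)*(sin t * sin (l*t)) := mul_pos (by nlinarith) (by positivity)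
    nlinarith
  have := h (left_mem_Icc.2 pi_pos.le) ⟨hs.le, hs'⟩ hs
  simp at this
  linarith

lemma sin_aux {x y : ℝ} (hx : 0 < x) (hxy : x < y) (hy : y ≤ π) : x * sin y < y * sin x := by
  have hy0 : 0 < y := hx.trans hxy
  have := strictConcaveOn_sin_Icc.2 (left_mem_Icc.2 pi_pos.le) (show y ∈ Icc 0 π from ⟨hy0.le, hy⟩) hy0.ne
    (show 0 < 1 - x/y by rw [sub_pos, div_lt_one hy0]; exact hxy) (show 0 < x/y by positivity) (by ring)
  simp at this
  have h3 : x/y*y = x := by field_simp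
  rw [h3, div_mul_eq_mul_div, div_lt_iff₀ hy0] at this
  linarith

lemma cos_ratio {a b : ℝ} (ha : 0 < a) (hb : 0 < b) (hs : a + b < π/2) :
    cos (a+b) ≤ cos a * exp (-(b * tan ((a+b)/2))) := by
  set u := a + b/2 with hu
  have hu1 : 0 < cos u := cos_pos_of_mem_Ioo ⟨by linarith, by linarith⟩
  have hx1 : 0 < cos (b/2) := cos_pos_of_mem_Ioo ⟨by linarith, by linarith⟩
  have e1 : cos (a+b) = cos u * cos (b/2) - sin u * sin (b/2) := by
    rw [← cos_add]; congr 1; ring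
  have e2 : cos a = cos u * cos (b/2) + sin u * sin (b/2) := by
    rw [← cos_sub]; congr 1; ring
  have hs0 : 0 < cos (a+b) := cos_pos_of_mem_Ioo ⟨by linarith, by linarith⟩
  have ha0 : 0 < cos a := cos_pos_of_mem_Ioo ⟨by linarith, by linarith⟩
  have t1 : tan ((a+b)/2) ≤ tan u := by
    apply (strictMonoOn_tan.monotoneOn) ⟨by linarith, by linarith⟩ ⟨by linarith, by linarith⟩
    rw [hu]; linarith
  have t2 : b/2 ≤ tan (b/2) := le_tan (by linarith) (by linarith)
  have t3 : 0 ≤ tan u := tan_nonneg_of_nonneg_of_le_pi_div_two (by positivity) (by linarith)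
  set y := tan u * tan (b/2) with hy
  have hyc : cos u * cos (b/2) * y = sin u * sin (b/2) := by
    rw [hy, tan_eq_sin_div_cos, tan_eq_sin_div_cos]; field_simp
  have hy0 : 0 ≤ y := by rw [hy]; exact mul_nonneg t3 (by linarith)
  have hcc : 0 < cos u * cos (b/2) := by positivity
  have hy1 : y < 1 := by
    by_contra h
    push Not at h
    nlinarith
  have hl := Real.le_log_one_add_of_nonneg (x := 2*y/(1-y)) (by apply div_nonneg <;> linarith)
  have h1y : 0 < 1 - y := by linarith
  have r1 : 2 * (2*y/(1-y)) / (2*y/(1-y)+2) = 2*y := by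
    have : 2*y/(1-y)+2 = 2/(1-y) := by field_simp; ring
    rw [this]; field_simp
  have r2 : 1 + 2*y/(1-y) = (1+y)/(1-y) := by field_simp; ring
  rw [r1, r2, Real.le_log_iff_exp_le (by positivity), le_div_iff₀ h1y] at hl
  have hb2 : b * tan ((a+b)/2) ≤ 2*y := by
    rw [hy]
    nlinarith
  have h3 : exp (b * tan ((a+b)/2)) * (1-y) ≤ 1 + y :=
    (mul_le_mul_of_nonneg_right (exp_le_exp.2 hb2) h1y.le).trans hl
  rw [exp_neg, ← div_eq_mul_inv, le_div_iff₀ (exp_pos _), e1, e2, ← hyc]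
  nlinarith

lemma r_lower {a b : ℝ} (ha : 0 < a) (hb : 0 < b) (hs : a + b < π/2) :
    exp (-(a * tan ((a+b)/2))) ≤ b * sin (a+b) / ((a+b) * sin b) := by
  set k := tan ((a+b)/2) with hk
  have hsub : ∀ t ∈ Icc b (a+b), 0 < t ∧ 0 < sin t := fun t ht =>
    ⟨hb.trans_le ht.1, sin_pos_of_pos_of_lt_pi (hb.trans_le ht.1) (by linarith [ht.2])⟩
  have h : MonotoneOn (fun t => log (sin t) - log t + k * t) (Icc b (a+b)) := by
    have hd : ∀ t ∈ Icc b (a+b), HasDerivAt (fun t => log (sin t) - log t + k * t) (cos t / sin t - 1/t + k*1) t := by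
      intro t ht
      obtain ⟨h0, h1⟩ := hsub t ht
      exact (((hasDerivAt_sin t).log h1.ne').sub ((hasDerivAt_id t).log h0.ne')).add ((hasDerivAt_id t).const_mul k)
    apply monotoneOn_of_deriv_nonneg (convex_Icc _ _)
    · exact fun t ht => (hd t ht).continuousAt.continuousWithinAt
    · intro t ht
      exact (hd t (interior_subset ht)).differentiableAt.differentiableWithinAt
    · intro t ht
      have ht := interior_subset ht
      rw [(hd t ht).deriv]
      obtain ⟨h0, h1⟩ := hsub t ht
      have hkt : tan (t/2) ≤ k := by
        apply (strictMonoOn_tan.monotoneOn) ⟨by linarith, by linarith [ht.2]⟩ ⟨by linarith, by linarith⟩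
        linarith [ht.2]
      have : cos t / sin t + tan (t/2) = 1 / sin t := by
        have c1 : 0 < cos (t/2) := cos_pos_of_mem_Ioo ⟨by linarith, by linarith [ht.2]⟩
        have s1 : 0 < sin (t/2) := sin_pos_of_pos_of_lt_pi (by linarith) (by linarith [ht.2])
        have ec : cos t = 1 - 2 * sin (t/2)^2 := by
          rw [show t = 2*(t/2) by ring, cos_two_mul, cos_sq']; ring_nf
        have es : sin t = 2 * sin (t/2) * cos (t/2) := by
          rw [← sin_two_mul]; ring_nf
        rw [ec, es, tan_eq_sin_div_cos]
        field_simp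
        ring
      have : 1/t ≤ 1/sin t := one_div_le_one_div_of_le h1 (sin_lt h0).le
      linarith
  have := h (left_mem_Icc.2 (by linarith)) (right_mem_Icc.2 (by linarith)) (by linarith)
  simp only at this
  have p1 := (hsub b ⟨le_rfl, by linarith⟩).2
  have p2 := (hsub (a+b) ⟨by linarith, le_rfl⟩).2
  rw [← Real.le_log_iff_exp_le (by positivity), log_div (by positivity) (by positivity), log_mul (by positivity) (by positivity), log_mul (by positivity) (by positivity)]
  linarith

lemma R_lower {p q s : ℝ} (hp : 0 < p) (hq : 0 < q) (h1 : p + q = 1) (hs : 0 < s) (hs2 : s < π/2) :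
    cos s ≤ (q * sin s / sin (q*s))^(q/p) * cos (p*s) := by
  have hps : 0 < p*s := by positivity
  have hqs : 0 < q*s := by positivity
  have e : p*s+q*s = s := by rw [← add_mul, h1, one_mul]
  have r1 := r_lower hps hqs (by linarith)
  have r2 := cos_ratio hps hqs (by linarith)
  rw [e] at r1 r2
  have e3 : q * s * sin s / (s * sin (q*s)) = q * sin s / sin (q*s) := by
    field_simp
  rw [e3] at r1
  have r3 := Real.rpow_le_rpow (exp_pos _).le r1 (show 0 ≤ q/p by positivity)
  rw [← Real.exp_mul] at r3
  have e4 : -(p * s * tan (s / 2)) * (q / p) = -(q*s*tan (s/2)) := by field_simp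
  rw [e4] at r3
  have ca : 0 < cos (p*s) := cos_pos_of_mem_Ioo ⟨by linarith, by linarith⟩
  nlinarith

lemma algA {C S sb cb : ℝ} (hcb : 0 < cb) (hsb : 0 < sb) (hb1 : sb^2+cb^2 = 1) (hC0 : 0 < C) (hS0 : 0 < S)
    (h9 : C*cb < S*(1+sb)) : 0 < (S^2-C^2)*cb+2*C*S*sb := by
  have h10 : (1-sb)*C < cb*S := by
    have : (1-sb)*C*(1+sb) < cb*S*(1+sb) := by
      have h1 : (1-sb)*C*(1+sb) = cb * (C * cb) := by linear_combination (-C)*hb1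
      have h2 := mul_lt_mul_of_pos_left h9 hcb
      linarith
    exact lt_of_mul_lt_mul_right this (by positivity)
  have h11 : cb * ((S^2-C^2)*cb+2*C*S*sb) = (cb*S+(1+sb)*C)*(cb*S-(1-sb)*C) := by
    linear_combination (-C^2)*hb1
  have h12 : 0 < (cb*S+(1+sb)*C)*(cb*S-(1-sb)*C) := mul_pos (by positivity) (by linarith)
  rw [← h11] at h12
  exact pos_of_mul_pos_right h12 hcb.le

lemma key4 (p q x y C S : ℝ) (hp : p ≠ 0) (hq : q ≠ 0) (h1 : q = 1 - p) (hxy : x + y ≠ 0)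
  (hC : C = 1 - (p/q) * (x*y-1)/(1+y^2)) (hS : S = (p/q) * (x+y)/(1+y^2)) :
  1+x^2+q^2*(x+y)^2-2*q*x*(x+y) = q^2*(1+y^2)*(C^2+S^2) := by
  have hy : 1+y^2 ≠ 0 := by positivity
  subst hC hS
  field_simp
  subst h1
  ring

lemma key5 (p q x y C S : ℝ) (hp : p ≠ 0) (hq : q ≠ 0) (h1 : q = 1 - p) (hxy : x + y ≠ 0)
  (hC : C = 1 - (p/q) * (x*y-1)/(1+y^2)) (hS : S = (p/q) * (x+y)/(1+y^2)) :
  q*(x+y)^2*((x*y-1)/(x+y)-q*y) - x*(x+y)*((x*y-1)/(x+y)-q*y) + p*(x+y)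
    = q*(1+y^2)*((p*x-q*y)*C+S) := by
  have hy : 1+y^2 ≠ 0 := by positivity
  subst hC hS
  field_simp
  subst h1
  ring


lemma sin_l_pos {l s : ℝ} (hl : 0 < l) (hl1 : l < 1) (hs : s ∈ Ioo 0 π) : 0 < sin (l*s) :=
  sin_pos_of_pos_of_lt_pi (mul_pos hl hs.1) (by nlinarith [hs.1, hs.2])

set_option maxHeartbeats 1000000 in
lemma sign_main {p q s c : ℝ} (hp : 0 < p) (hpq : p ≤ q) (h1 : p + q = 1) (hs : s ∈ Ioo 0 π)
    (hc : 0 < c) (hc1 : c < 1) (m C S : ℝ) (hm : m = p * sin (q*s) / (q * sin (p*s)))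
    (hC : C = 1 - m * cos s) (hS : S = m * sin s) :
    0 < (q * sin s / sin (q*s))^(q/p) * ((S^2-C^2) * cos (q*s) + 2*C*S*sin (q*s)) - c * (S^2-C^2) := by
  have hq : 0 < q := by linarith
  have hq1 : q < 1 := by linarith
  have hp1 : p < 1 := by linarith
  have hsa := sin_l_pos hp hp1 hs
  have hsb := sin_l_pos hq hq1 hs
  have hss : 0 < sin s := sin_pos_of_pos_of_lt_pi hs.1 hs.2
  have e : p*s+q*s = s := by rw [← add_mul, h1, one_mul]
  have hs0 := hs.1
  have hs1 := hs.2
  have hps : p*s ≤ s/2 := by nlinarith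
  have hps0 : 0 < p*s := by positivity
  have hqs0 : 0 < q*s := by positivity
  have hca : 0 < cos (p*s) := cos_pos_of_mem_Ioo ⟨by linarith, by linarith⟩
  have hm0 : 0 < m := by rw [hm]; positivity
  have hmul : m * (q * sin (p*s)) = p * sin (q*s) := by rw [hm]; field_simp
  have hm1 : m ≤ 1 := by
    rw [hm, div_le_one (by positivity)]
    rcases hpq.eq_or_lt with h | h
    · rw [h]
    · have := sin_aux hps0 (show p*s < q*s by nlinarith) (by nlinarith)
      nlinarith
  have hS0 : 0 < S := by rw [hS]; positivity
  have hcs1 : cos s < 1 := by nlinarith [sin_sq_add_cos_sq s, cos_le_one s]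
  have hcs2 : -1 < cos s := by nlinarith [sin_sq_add_cos_sq s, neg_one_le_cos s]
  have hC0 : 0 < C := by rw [hC]; nlinarith
  have hsin : sin s = sin (p*s) * cos (q*s) + cos (p*s) * sin (q*s) := by rw [← sin_add, e]
  have hcos : cos s = cos (p*s) * cos (q*s) - sin (p*s) * sin (q*s) := by rw [← cos_add, e]
  have hca' : cos (p*s) = cos s * cos (q*s) + sin s * sin (q*s) := by
    rw [← cos_sub]; congr 1; linarith
  set sa := sin (p*s)
  set sb := sin (q*s) with hsbd
  set ca := cos (p*s) with hcad
  set cb := cos (q*s) with hcbd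
  have hb1 : sb^2+cb^2 = 1 := sin_sq_add_cos_sq _
  have hss1 : sin s^2+cos s^2 = 1 := sin_sq_add_cos_sq _
  have hR : 0 < (q * sin s / sb)^(q/p) := by positivity
  have hRl : s < π/2 → cos s ≤ (q * sin s / sb)^(q/p) * ca := R_lower hp hq h1 hs0
  set R := (q * sin s / sb)^(q/p)
  by_cases hU : 0 < S^2 - C^2
  · have hSC : C < S := by nlinarith
    have hs2 : s < π/2 := by
      by_contra h
      push Not at h
      have : cos s ≤ 0 := cos_nonpos_of_pi_div_two_le_of_le h (by linarith)
      nlinarith [sin_le_one s]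
    have hcs : 0 < cos s := cos_pos_of_mem_Ioo ⟨by linarith, by linarith⟩
    have hRl := hRl hs2
    have hV : 2*C*S*cos s = (S^2-C^2)*sin s + (1-m^2)*sin s := by
      rw [hC, hS]; linear_combination (-m^2*sin s) * hss1
    have hA : ((S^2-C^2)*cb+2*C*S*sb) * cos s = (S^2-C^2)*ca + (1-m^2)*sin s*sb := by
      rw [hca']; linear_combination sb * hV
    have h4 : 0 ≤ (1-m^2)*sin s*sb := by
      have i0 : 0 ≤ 1 - m^2 := sub_nonneg.2 (pow_le_one₀ hm0.le hm1)
      exact mul_nonneg (mul_nonneg i0 hss.le) hsb.le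
    have h5 : (S^2-C^2)*cos s ≤ R * ((S^2-C^2)*cb+2*C*S*sb) * cos s := by
      rw [mul_assoc, hA]
      have i1 := mul_nonneg hR.le h4
      have i2 := mul_le_mul_of_nonneg_left hRl hU.le
      linarith
    have h6 := le_of_mul_le_mul_right h5 hcs
    have i3 := mul_lt_mul_of_pos_right hc1 hU
    linarith
  · push Not at hU
    have hA : 0 < (S^2-C^2)*cb+2*C*S*sb := by
      by_cases hcb : cb ≤ 0
      · have : 0 < 2*C*S*sb := by positivity
        have := mul_nonneg_of_nonpos_of_nonpos hU hcb
        linarith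
      · push Not at hcb
        have hg : q * sa * cb ≤ p * ca * sb := by
          rcases hpq.eq_or_lt with h | h
          · have : sa = sb := by simp only [sa, sb, h]
            have : ca = cb := by simp only [ca, cb, h]
            rw [‹sa = sb›, ‹ca = cb›, h]; linarith
          · have := g_aux (l := p/q) (s := q*s) (by positivity) ((div_lt_one hq).2 h) hqs0 (by nlinarith)
            have e5 : p/q*(q*s) = p*s := by field_simp
            rw [e5] at this
            have h7 : q * (cb * sa) < q * (p/q*ca*sb) := mul_lt_mul_of_pos_left this hq
            have h8 : q * (p/q*ca*sb) = p*ca*sb := by field_simp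
            linarith
        have hk : cb < m * (sin s + ca) := by
          have : cb * (q*sa) < m * (sin s + ca) * (q*sa) := by
            have : m * (sin s + ca) * (q*sa) = p*sb*(sin s + ca) := by rw [← hmul]; ring
            rw [this]
            have i4 : 0 < p * sb * sin s := by positivity
            linarith
          exact lt_of_mul_lt_mul_right this (by positivity)
        exact algA hcb hsb hb1 hC0 hS0 (by rw [hC, hS]; rw [hca'] at hk; linarith)
    have i5 := mul_pos hR hA
    have i6 := mul_nonpos_of_nonneg_of_nonpos hc.le hU
    linarith

/-- the ratio -/
noncomputable def rr (l s : ℝ) : ℝ := l * sin s / sin (l*s)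

lemma rr_pos {l s : ℝ} (hl : 0 < l) (hl1 : l < 1) (hs : s ∈ Ioo 0 π) : 0 < rr l s := by
  have := sin_l_pos hl hl1 hs
  have := sin_pos_of_pos_of_lt_pi hs.1 hs.2
  unfold rr; positivity

lemma rr_lt_one {l s : ℝ} (hl : 0 < l) (hl1 : l < 1) (hs : s ∈ Ioo 0 π) : rr l s < 1 := by
  have h1 := sin_l_pos hl hl1 hs
  have h2 := sin_aux (mul_pos hl hs.1) (show l*s < s by nlinarith [hs.1]) hs.2.le
  unfold rr
  rw [div_lt_one h1]
  nlinarith [hs.1]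

lemma rr_deriv {l s : ℝ} (hl : 0 < l) (hl1 : l < 1) (hs : s ∈ Ioo 0 π) :
    HasDerivAt (rr l) (rr l s * (cos s / sin s - l * (cos (l*s) / sin (l*s)))) s := by
  have h1 := sin_l_pos hl hl1 hs
  have h2 := sin_pos_of_pos_of_lt_pi hs.1 hs.2
  have h3 : HasDerivAt (fun s => l*s) (l*1) s := (hasDerivAt_id s).const_mul l
  have := ((hasDerivAt_sin s).const_mul l).div h3.sin h1.ne'
  refine this.congr_deriv ?_
  unfold rr
  field_simp

lemma rho_neg {l s : ℝ} (hl : 0 < l) (hl1 : l < 1) (hs : s ∈ Ioo 0 π) :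
    cos s / sin s - l * (cos (l*s) / sin (l*s)) < 0 := by
  have h1 := sin_l_pos hl hl1 hs
  have h2 := sin_pos_of_pos_of_lt_pi hs.1 hs.2
  have := g_aux hl hl1 hs.1 hs.2.le
  rw [sub_neg, ← mul_div_assoc, div_lt_div_iff₀ h2 h1]
  exact this

lemma rr_anti {l : ℝ} (hl : 0 < l) (hl1 : l < 1) : StrictAntiOn (rr l) (Ioo 0 π) := by
  apply strictAntiOn_of_deriv_neg (convex_Ioo _ _)
  · exact fun s hs => (rr_deriv hl hl1 hs).continuousAt.continuousWithinAt
  · intro s hs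
    have hs := interior_subset hs
    rw [(rr_deriv hl hl1 hs).deriv]
    exact mul_neg_of_pos_of_neg (rr_pos hl hl1 hs) (rho_neg hl hl1 hs)

/-- the critical value -/
noncomputable def cc (p q s : ℝ) : ℝ := rr q s ^ (q/p) * rr p s

lemma cc_anti {p q : ℝ} (hp : 0 < p) (hq : 0 < q) (h1 : p + q = 1) : StrictAntiOn (cc p q) (Ioo 0 π) := by
  intro x hx y hy hxy
  have a1 := rr_anti hp (by linarith) hx hy hxy
  have a2 := rr_anti hq (by linarith) hx hy hxy
  have b1 := rr_pos hp (by linarith) hy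
  have b2 := rr_pos hq (by linarith) hy
  unfold cc
  have := Real.rpow_lt_rpow b2.le a2 (show 0 < q/p by positivity)
  have := Real.rpow_pos_of_pos b2 (q/p)
  nlinarith

lemma cc_pos {p q s : ℝ} (hp : 0 < p) (hq : 0 < q) (h1 : p + q = 1) (hs : s ∈ Ioo 0 π) : 0 < cc p q s := by
  have b1 := rr_pos hp (by linarith) hs
  have b2 := rr_pos hq (by linarith) hs
  unfold cc; positivity

lemma cc_lt_one {p q s : ℝ} (hp : 0 < p) (hq : 0 < q) (h1 : p + q = 1) (hs : s ∈ Ioo 0 π) : cc p q s < 1 := by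
  have b1 := rr_pos hp (by linarith) hs
  have b2 := rr_pos hq (by linarith) hs
  have a1 := rr_lt_one hp (by linarith) hs
  have a2 := rr_lt_one hq (by linarith) hs
  unfold cc
  have := Real.rpow_lt_one b2.le a2 (show 0 < q/p by positivity)
  have := Real.rpow_pos_of_pos b2 (q/p)
  nlinarith

/-- numerator factor -/
noncomputable def EE (p q s : ℝ) : ℝ := 1 + rr q s ^ 2 - 2 * rr q s * cos (p*s)
/-- denominator -/
noncomputable def DD (p q c s : ℝ) : ℝ :=
  (rr q s ^ (q/p))^2 - 2 * c * rr q s ^ (q/p) * cos (q*s) + c^2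
/-- the function -/
noncomputable def SS (p q c s : ℝ) : ℝ := (rr q s ^ (q/p))^2 * EE p q s / DD p q c s

set_option maxHeartbeats 1000000 in
lemma SS_deriv {p q s c : ℝ} (hp : 0 < p) (hpq : p ≤ q) (h1 : p + q = 1) (hs : s ∈ Ioo 0 π)
    (hc : 0 < c) (hc1 : c < 1) :
    ∃ K : ℝ, 0 < K ∧ HasDerivAt (SS p q c) (K * (cc p q s - c)) s := by
  have hq : 0 < q := by linarith
  have hq1 : q < 1 := by linarith
  have hp1 : p < 1 := by linarith
  have hsa := sin_l_pos hp hp1 hs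
  have hsb := sin_l_pos hq hq1 hs
  have hss : 0 < sin s := sin_pos_of_pos_of_lt_pi hs.1 hs.2
  have e : p*s+q*s = s := by rw [← add_mul, h1, one_mul]
  have hsin : sin s = sin (p*s) * cos (q*s) + cos (p*s) * sin (q*s) := by rw [← sin_add, e]
  have hcos : cos s = cos (p*s) * cos (q*s) - sin (p*s) * sin (q*s) := by rw [← cos_add, e]
  have hsign := sign_main hp hpq h1 hs hc hc1 _ _ _ rfl rfl rfl
  have hr := rr_pos hq hq1 hs
  have hR : 0 < rr q s ^ (q/p) := by positivity
  have dr := rr_deriv hq hq1 hs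
  have rho1 := rho_neg hq hq1 hs
  have rho2 := rho_neg hp hp1 hs
  have dR := dr.rpow_const (p := q/p) (Or.inl hr.ne')
  have hRR : rr q s ^ (q/p - 1) = rr q s ^ (q/p) / rr q s := Real.rpow_sub_one hr.ne' _
  have dp : HasDerivAt (fun s => p*s) (p*1) s := (hasDerivAt_id s).const_mul p
  have dq : HasDerivAt (fun s => q*s) (q*1) s := (hasDerivAt_id s).const_mul q
  have dE : HasDerivAt (EE p q) _ s := ((dr.pow 2).const_add 1).sub ((dr.const_mul 2).mul dp.cos)
  have dD : HasDerivAt (DD p q c) _ s :=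
    ((dR.pow 2).sub ((dR.const_mul (2*c)).mul dq.cos)).add_const (c^2)
  have hD : 0 < DD p q c s := by
    have : DD p q c s = (rr q s ^ (q/p) - c * cos (q*s))^2 + c^2 * sin (q*s)^2 := by
      unfold DD; linear_combination (-c^2) * sin_sq_add_cos_sq (q*s)
    rw [this]; positivity
  have dS : HasDerivAt (SS p q c) _ s := ((dR.pow 2).mul dE).div dD hD.ne'
  -- tangent variables
  obtain ⟨x, hx⟩ : ∃ x, x = cos (p*s) / sin (p*s) := ⟨_, rfl⟩
  obtain ⟨y, hy⟩ : ∃ y, y = cos (q*s) / sin (q*s) := ⟨_, rfl⟩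
  have hca : cos (p*s) = sin (p*s) * x := by rw [hx]; field_simp
  have hcb : cos (q*s) = sin (q*s) * y := by rw [hy]; field_simp
  have hb2 : sin (q*s)^2 * (1+y^2) = 1 := by
    have := sin_sq_add_cos_sq (q*s)
    rw [hcb] at this; linarith
  have ha2 : sin (p*s)^2 * (1+x^2) = 1 := by
    have := sin_sq_add_cos_sq (p*s)
    rw [hca] at this; linarith
  rw [hca, hcb] at hsin hcos
  have hsin' : sin s = sin (p*s) * sin (q*s) * (x+y) := by rw [hsin]; ring
  have hcos' : cos s = sin (p*s) * sin (q*s) * (x*y-1) := by rw [hcos]; ring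
  have hxy : 0 < x + y := by
    rw [hsin'] at hss
    exact pos_of_mul_pos_right hss (by positivity)
  have hcot : cos s / sin s = (x*y-1)/(x+y) := by rw [hcos', hsin']; exact mul_div_mul_left _ _ (by positivity)
  have hrv : rr q s = q * sin (p*s) * (x+y) := by unfold rr; rw [hsin']; field_simp
  have hrp : rr p s = p * sin (q*s) * (x+y) := by unfold rr; rw [hsin']; field_simp
  set m := p * sin (q*s) / (q * sin (p*s)) with hm
  have hw : sin (q*s)^2 = 1/(1+y^2) := by
    have : 1+y^2 ≠ 0 := by positivity
    field_simp; exact hb2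
  have hC : 1 - m * cos s = 1 - (p/q) * (x*y-1)/(1+y^2) := by
    rw [hcos', hm]
    have : p * sin (q * s) / (q * sin (p * s)) * (sin (p * s) * sin (q * s) * (x * y - 1)) = p/q*(x*y-1)*sin (q*s)^2 := by field_simp
    rw [this, hw]; ring
  have hS : m * sin s = (p/q) * (x+y)/(1+y^2) := by
    rw [hsin', hm]
    have : p * sin (q * s) / (q * sin (p * s)) * (sin (p * s) * sin (q * s) * (x + y)) = p/q*(x+y)*sin (q*s)^2 := by field_simp
    rw [this, hw]; ring
  have k1 := key1 p q x y _ _ hp.ne' hq.ne' (by linarith) hxy.ne' hC hS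
  have k2 := key2 p q x y _ _ hp.ne' hq.ne' (by linarith) hxy.ne' hC hS
  have k3 := key3 p q x y _ _ hp.ne' hq.ne' (by linarith) hxy.ne' hC hS
  have hSpos : 0 < m * sin s := by
    have : 0 < m := by rw [hm]; positivity
    positivity
  change 0 < rr q s ^ (q/p) * _ - _ at hsign
  have hccv : cc p q s = rr q s ^ (q/p) * rr p s := rfl
  rw [hcot, ← hx] at rho2
  rw [hcot, ← hy] at rho1
  rw [hcot, ← hy, hca, hcb, hRR] at dS
  rw [hcb] at hsign
  have hDv : DD p q c s = (rr q s ^ (q/p))^2 - 2 * c * rr q s ^ (q/p) * (sin (q*s)*y) + c^2 := by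
    rw [← hcb]; rfl
  -- E values
  have k4 := key4 p q x y _ _ hp.ne' hq.ne' (by linarith) hxy.ne' hC hS
  have k5 := key5 p q x y _ _ hp.ne' hq.ne' (by linarith) hxy.ne' hC hS
  have hEv : EE p q s = 1 + rr q s ^ 2 - 2 * rr q s * (sin (p*s) * x) := by rw [← hca]; rfl
  change HasDerivAt _ (((_ + (rr q s ^ (q/p))^2 * _) * _ - ((rr q s ^ (q/p))^2 * EE p q s) * _)/_) s at dS
  have dS' := dS
  clear dS dE dD dR dr hRR hm hC hS hx hy
  generalize rr q s ^ (q/p) = R at *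
  generalize 1 - m * cos s = C at *
  generalize m * sin s = S at *
  generalize sin (p*s) = sa at *
  generalize sin (q*s) = sb at *
  generalize DD p q c s = D at *
  generalize EE p q s = E at *
  generalize rr q s = r at *
  generalize rr p s = r' at *
  have hM : 0 < C^2+S^2 := by positivity
  have hE : E = q^2*sa^2*(1+y^2)*(C^2+S^2) := by
    rw [hEv, hrv]
    linear_combination sa^2 * k4 - ha2
  generalize hrho : (x*y-1)/(x+y) - q*y = ρ at *
  have hγ : ((x*y-1)/(x+y) - q^2*y - p^2*x)/p < 0 := by
    apply div_neg_of_neg_of_pos _ hp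
    have : (x*y-1)/(x+y) - q^2*y - p^2*x = q*((x*y-1)/(x+y) - q*y) + p*((x*y-1)/(x+y) - p*x) := by
      linear_combination (-(x*y-1)/(x+y)) * h1
    rw [this, hrho]
    have i1 := mul_neg_of_pos_of_neg hq rho1
    have i2 := mul_neg_of_pos_of_neg hp rho2
    linarith
  generalize ((x*y-1)/(x+y) - q^2*y - p^2*x)/p = γ at *
  refine ⟨2*R^2*(q^2*sa^2*(1+y^2))*(-γ/q)*(R*((S^2-C^2)*(sb*y)+2*C*S*sb) - c*(S^2-C^2))/((C^2+S^2)*D^2), ?_, ?_⟩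
  · have : 0 < -γ := by linarith
    positivity
  · refine dS'.congr_deriv ?_
    have hk : (C^2+S^2)*(((q/p)*ρ*(C^2+S^2)+((p*x-q*y)*C+S))*D
        - (C^2+S^2)*(R^2*((q/p)*ρ) - c*R*((q/p)*ρ)*(sb*y) + c*R*q*sb))
        = -(cc p q s - c)*γ/q*(R*((S^2-C^2)*(sb*y)+2*C*S*sb) - c*(S^2-C^2)) := by
      rw [hDv, hccv, hrp]
      have hb3 : sb^2 = 1/(1+y^2) := by
        have : 1+y^2 ≠ 0 := by positivity
        rw [eq_div_iff this]; exact hb2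
      rw [div_eq_mul_inv (p/q), ← one_div, ← hb3] at k1
      linear_combination R^2*k1 - c*R*sb*k2 + c^2*k3
    have hN : ∀ W Z : ℝ, W = 2*R^2*(q^2*sa^2*(1+y^2)) * Z → (C^2+S^2)*Z = -(cc p q s - c)*γ/q*(R*((S^2-C^2)*(sb*y)+2*C*S*sb) - c*(S^2-C^2)) →
       W / D^2 = 2*R^2*(q^2*sa^2*(1+y^2))*(-γ/q)*(R*((S^2-C^2)*(sb*y)+2*C*S*sb) - c*(S^2-C^2))/((C^2+S^2)*D^2) * (cc p q s - c) := by
      intro W Z hW hZ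
      have hM' := hM.ne'
      have hZ' : Z = -(cc p q s - c)*γ/q*(R*((S^2-C^2)*(sb*y)+2*C*S*sb) - c*(S^2-C^2)) / (C^2+S^2) := by
        rw [eq_div_iff hM', ← hZ]; ring
      rw [hW, hZ']
      have hD' := hD.ne'
      generalize C^2+S^2 = M at *
      field_simp
    refine hN _ _ ?_ hk
    have hE' : r^2*ρ - r*ρ*(sa*x) + r*p*sa = q^2*sa^2*(1+y^2)*((p*x-q*y)*C+S) := by
      rw [hrv]
      linear_combination q*sa^2*k5
    have hrr : r * ρ * (q/p) * (R/r) = R*((q/p)*ρ) := by field_simp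
    rw [hrr, hE]
    push_cast
    linear_combination 2*R^2*D*hE'

lemma SS_mono {p q θ : ℝ} (hp : 0 < p) (hpq : p ≤ q) (h1 : p + q = 1) (hθ : θ ∈ Ioo 0 π) :
    StrictMonoOn (SS p q (cc p q θ)) (Ioo 0 θ) ∧ StrictAntiOn (SS p q (cc p q θ)) (Ioo θ π) := by
  have hq : 0 < q := by linarith
  have hc := cc_pos hp hq h1 hθ
  have hc1 := cc_lt_one hp hq h1 hθ
  have hanti := cc_anti hp hq h1
  constructor
  · apply strictMonoOn_of_deriv_pos (convex_Ioo _ _)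
    · intro s hs
      obtain ⟨K, hK, h⟩ := SS_deriv hp hpq h1 ⟨hs.1, hs.2.trans hθ.2⟩ hc hc1
      exact h.continuousAt.continuousWithinAt
    · intro s hs
      have hs := interior_subset hs
      have hs' : s ∈ Ioo 0 π := ⟨hs.1, hs.2.trans hθ.2⟩
      obtain ⟨K, hK, h⟩ := SS_deriv hp hpq h1 hs' hc hc1
      rw [h.deriv]
      exact mul_pos hK (sub_pos.2 (hanti hs' hθ hs.2))
  · apply strictAntiOn_of_deriv_neg (convex_Ioo _ _)
    · intro s hs
      obtain ⟨K, hK, h⟩ := SS_deriv hp hpq h1 ⟨hθ.1.trans hs.1, hs.2⟩ hc hc1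
      exact h.continuousAt.continuousWithinAt
    · intro s hs
      have hs := interior_subset hs
      have hs' : s ∈ Ioo 0 π := ⟨hθ.1.trans hs.1, hs.2⟩
      obtain ⟨K, hK, h⟩ := SS_deriv hp hpq h1 hs' hc hc1
      rw [h.deriv]
      exact mul_neg_of_pos_of_neg hK (sub_neg.2 (hanti hθ hs' hs.1))

lemma Th_eq (α t : ℝ) (hα : 0 < α) : Th α t = rr (1/(1+α)) (π - t) := by
  unfold Th rr
  rw [sin_pi_sub, one_div_mul_eq_div, one_div_mul_eq_div, div_div]

theorem stmt9 (α θ : ℝ) (hα : 1 ≤ α) (hθ : θ ∈ Set.Ioo 0 Real.pi) :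
    StrictMonoOn (T α θ) (Set.Ioo 0 θ) ∧ StrictAntiOn (T α θ) (Set.Ioo θ Real.pi) := by
  have hα0 : 0 < α := by linarith
  obtain ⟨p, hp⟩ : ∃ p, p = 1/(1+α) := ⟨_, rfl⟩
  obtain ⟨q, hq⟩ : ∃ q, q = 1/(1+1/α) := ⟨_, rfl⟩
  have hp0 : 0 < p := by rw [hp]; positivity
  have hq0 : 0 < q := by rw [hq]; positivity
  have hqp : q / p = α := by rw [hp, hq]; field_simp; ring
  have h1 : p + q = 1 := by rw [hp, hq]; field_simp; ring
  have hpq : p ≤ q := by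
    rw [div_eq_iff hp0.ne'] at hqp
    nlinarith
  have hθ' : π - θ ∈ Ioo 0 π := ⟨by linarith [hθ.2], by linarith [hθ.1]⟩
  obtain ⟨m1, m2⟩ := SS_mono hp0 hpq h1 hθ'
  have hT : ∀ φ ∈ Ioo 0 π, T α θ φ = SS p q (cc p q (π - θ)) (π - φ) := by
    intro φ hφ
    have hφ' : π - φ ∈ Ioo 0 π := ⟨by linarith [hφ.2], by linarith [hφ.1]⟩
    have a1 := (rr_pos hq0 (by linarith) hθ').le
    have a2 := (rr_pos hq0 (by linarith) hφ').le
    have hpow : ∀ x : ℝ, 0 ≤ x → x ^ (2*α) = (x^α)^2 := by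
      intro x hx
      rw [mul_comm, Real.rpow_mul hx]; norm_num
    have e1 : (π - φ)/(1+α) = p * (π - φ) := by rw [hp, one_div_mul_eq_div]
    have e2 : (π - φ)/(1+1/α) = q * (π - φ) := by rw [hq, one_div_mul_eq_div]
    unfold T SS EE DD cc
    rw [Th_eq (1/α) φ (by positivity), Th_eq (1/α) θ (by positivity), Th_eq α θ hα0, ← hp, ← hq, hqp, e1, e2,
      hpow _ a1, hpow _ a2]
    congr 1
    ring
  constructor
  · intro x hx y hy hxy
    rw [hT x ⟨hx.1, hx.2.trans hθ.2⟩, hT y ⟨hy.1, hy.2.trans hθ.2⟩]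
    exact m2 ⟨by linarith [hy.2], by linarith [hy.1]⟩ ⟨by linarith [hx.2], by linarith [hx.1]⟩ (by linarith)
  · intro x hx y hy hxy
    rw [hT x ⟨hθ.1.trans hx.1, hx.2⟩, hT y ⟨hθ.1.trans hy.1, hy.2⟩]
    exact m1 ⟨by linarith [hy.2], by linarith [hy.1]⟩ ⟨by linarith [hx.2], by linarith [hx.1]⟩ (by linarith)
end

section
/- Fix a real α ≥ 1 and θ ∈ (0, π). Let ξ(φ) := 1 − 2·Θ_{1/α}(φ)^α · exp(−i·(π−φ)/(1+1/α)) for φ ∈ (0, π), and let ξ′(θ) denote the derivative of ξ at θ. Then Re( [(1+α)/(4α²)] · e^{−i(π − 2α(π−θ)/(1+α))} · Θ_{1/α}(θ)^{1−2α} · (ξ′(θ))² / (e^{i(π−θ)/(1+α)} − Θ_{1/α}(θ)) ) < 0. (This complex number equals the second derivative f_θ″(θ) of the phase function at the saddle point, so the statement asserts Re f_θ″(θ) < 0.) -/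
open Real Filter Set Topology

/-- `xi α φ = 1 − 2·Θ_{1/α}(φ)^α · exp(−i(π−φ)/(1+1/α))`. -/
noncomputable def xi (α φ : ℝ) : ℂ :=
  1 - ((2 * (Th (1/α) φ) ^ α : ℝ) : ℂ) *
    Complex.exp (-Complex.I * (((Real.pi - φ) / (1 + 1/α) : ℝ) : ℂ))

lemma aux_poly (a b C : ℝ) (hb : 0 < b) (hba : b < a) (hC : a * C ≤ b) (hC1 : C ≤ 1) :
    0 < b ^ 3 * (2 * C ^ 2 - 1) - 3 * a * b ^ 2 * C + 3 * b * a ^ 2 - a ^ 3 * C := by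
  have ha : 0 < a := hb.trans hba
  obtain ⟨r, rfl⟩ : ∃ r, b = a * r := ⟨b / a, by field_simp⟩
  have hr0 : 0 < r := by
    by_contra h
    nlinarith
  have hr1 : r < 1 := by
    by_contra h
    nlinarith
  have hCr : C ≤ r := le_of_mul_le_mul_left hC ha
  have h1 : 0 < 2 * r * (1 - r ^ 2) ^ 2 := by
    have : 0 < 1 - r ^ 2 := by nlinarith
    positivity
  have h2 : 0 ≤ (r - C) * (3 * r ^ 2 + 1 - 2 * r ^ 3 * (r + C)) := by
    apply mul_nonneg (by linarith)
    have h3 : r ^ 3 * (r + C) ≤ r ^ 3 * 2 := by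
      apply mul_le_mul_of_nonneg_left _ (by positivity)
      linarith
    have h4 : 0 ≤ (1 - r) * (4 * r ^ 2 + r + 1) := by
      apply mul_nonneg (by linarith); positivity
    nlinarith
  have : 0 < a ^ 3 * (2 * r * (1 - r ^ 2) ^ 2 + (r - C) * (3 * r ^ 2 + 1 - 2 * r ^ 3 * (r + C))) := by
    positivity
  nlinarith

lemma aux_trig (α v : ℝ) (hα : 1 ≤ α) (hv : 0 ≤ v) (hv2 : α * v ≤ π) :
    0 ≤ sin (α * v) * cos v - α * sin v * cos (α * v) := by
  have hα0 : 0 < α := by linarith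
  let f : ℝ → ℝ := fun x => sin (α * x) * cos x - α * sin x * cos (α * x)
  have hd : ∀ x, HasDerivAt f ((α ^ 2 - 1) * sin (α * x) * sin x) x := by
    intro x
    have h0 : HasDerivAt (fun y : ℝ => α * y) α x := by
      simpa using (hasDerivAt_id x).const_mul α
    have h1 := h0.sin
    have h2 := h0.cos
    refine ((h1.mul (hasDerivAt_cos x)).sub (((hasDerivAt_sin x).const_mul α).mul h2)).congr_deriv ?_
    ring
  have hm : MonotoneOn f (Icc 0 (π / α)) := by
    apply monotoneOn_of_deriv_nonneg (convex_Icc _ _)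
    · exact fun x _ => (hd x).continuousAt.continuousWithinAt
    · exact fun x _ => (hd x).differentiableAt.differentiableWithinAt
    · intro x hx
      rw [interior_Icc] at hx
      rw [(hd x).deriv]
      have h1 : α * x < π := by
        have := hx.2
        rw [lt_div_iff₀ hα0] at this
        linarith
      have hx0 := hx.1
      have h2 : x ≤ α * x := by nlinarith
      have : 0 ≤ sin x := sin_nonneg_of_nonneg_of_le_pi hx0.le (by linarith)
      have : 0 ≤ sin (α * x) := sin_nonneg_of_nonneg_of_le_pi (by positivity) (by linarith)
      have : 0 ≤ α ^ 2 - 1 := by nlinarith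
      positivity
  have h := hm (a := 0) (b := v) ⟨le_rfl, by positivity⟩
    ⟨hv, by rw [le_div_iff₀ hα0]; linarith⟩ hv
  simpa [f] using h

lemma aux_lt (n v : ℝ) (hn : 1 < n) (hv : 0 < v) (hv2 : n * v ≤ π) :
    sin (n * v) < n * sin v := by
  have hn0 : 0 < n := by linarith
  have hn1 : 0 < 1 - 1 / n := by
    have : 1 / n < 1 := by rw [div_lt_one hn0]; exact hn
    linarith
  have hn2 : 0 < 1 / n := by positivity
  have hx : (0:ℝ) ∈ Icc 0 π := ⟨le_rfl, pi_pos.le⟩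
  have hy : n * v ∈ Icc 0 π := ⟨by positivity, hv2⟩
  have h := strictConcaveOn_sin_Icc.2 hx hy (by positivity : (0:ℝ) < n * v).ne
    hn1 hn2 (by ring)
  have e : (1 / n) * (n * v) = v := by field_simp
  simp only [smul_eq_mul, sin_zero, mul_zero, zero_add, e] at h
  have := mul_lt_mul_of_pos_left h hn0
  have e2 : n * (1 / n * sin (n * v)) = sin (n * v) := by field_simp
  linarith

lemma aux_deriv (α θ D : ℝ) (hT : 0 < Th (1/α) θ)
    (hD : HasDerivAt (Th (1/α)) (Th (1/α) θ * D) θ) (hα : 0 < α) :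
    HasDerivAt (xi α) (-2 * α * ((Th (1/α) θ ^ α : ℝ) : ℂ) *
      Complex.exp (-Complex.I * (((Real.pi - θ) / (1 + 1/α) : ℝ) : ℂ)) *
      ((D : ℂ) + ((1 / (1 + α) : ℝ) : ℂ) * Complex.I)) θ := by
  have h1 : HasDerivAt (fun φ => 2 * (Th (1/α) φ) ^ α) (2 * α * Th (1/α) θ ^ α * D) θ := by
    refine ((hD.rpow_const (p := α) (Or.inl hT.ne')).const_mul 2).congr_deriv ?_
    rw [rpow_sub_one hT.ne']
    field_simp
  have h2 : HasDerivAt (fun φ : ℝ => (Real.pi - φ) / (1 + 1/α)) (-1 / (1 + 1/α)) θ := by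
    simpa using ((hasDerivAt_id θ).const_sub π).div_const (1 + 1/α)
  have h3 := (h2.ofReal_comp.const_mul (-Complex.I)).cexp
  have h4 := (h1.ofReal_comp.mul h3).const_sub 1
  refine HasDerivAt.congr_deriv (f := xi α) h4 ?_
  have : (-1 / (1 + 1/α)) = - α * (1 / (1 + α)) := by field_simp; ring
  rw [this]
  push_cast
  ring

theorem stmt10 (α θ : ℝ) (hα : 1 ≤ α) (hθ : θ ∈ Set.Ioo 0 Real.pi) :
    (((((1 + α) / (4 * α^2) : ℝ)) : ℂ) *
        Complex.exp (-Complex.I * ((Real.pi - 2 * α * (Real.pi - θ) / (1 + α) : ℝ) : ℂ)) *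
        (((Th (1/α) θ) ^ (1 - 2*α) : ℝ) : ℂ) * (deriv (xi α) θ)^2 /
      (Complex.exp (Complex.I * (((Real.pi - θ) / (1 + α) : ℝ) : ℂ)) -
        ((Th (1/α) θ : ℝ) : ℂ))).re < 0 := by
  have hα0 : 0 < α := by linarith
  obtain ⟨hθ0, hθ1⟩ := hθ
  obtain ⟨v, hv⟩ : ∃ v, v = (π - θ) / (1 + α) := ⟨_, rfl⟩
  have hv0 : 0 < v := by rw [hv]; apply div_pos <;> linarith
  have hθv : θ = π - (α * v + v) := by rw [hv]; field_simp; ring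
  have hu : (π - θ) / (1 + 1 / α) = α * v := by rw [hv]; field_simp; ring
  have hu0 : 0 < α * v := by positivity
  have hu1 : α * v < π := by linarith
  have hS : 0 < sin (α * v) := sin_pos_of_pos_of_lt_pi hu0 hu1
  have hs : 0 < sin θ := sin_pos_of_pos_of_lt_pi hθ0 hθ1
  have hsv : sin θ = sin (α * v) * cos v + cos (α * v) * sin v := by
    rw [hθv, sin_pi_sub, sin_add]
  have hcv : cos θ = - (cos (α * v) * cos v - sin (α * v) * sin v) := by
    rw [hθv, cos_pi_sub, cos_add]
  have ha : 0 < sin v := sin_pos_of_pos_of_lt_pi hv0 (by nlinarith)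
  have hTe : Th (1/α) θ = α * sin θ / ((1 + α) * sin (α * v)) := by
    unfold Th; rw [hu]; field_simp; ring
  have hT : 0 < Th (1/α) θ := by rw [hTe]; positivity
  obtain ⟨D, hDe⟩ : ∃ D, D = cos θ / sin θ + α / (1 + α) * (cos (α * v) / sin (α * v)) := ⟨_, rfl⟩
  have hD : HasDerivAt (Th (1/α)) (Th (1/α) θ * D) θ := by
    have h2 : HasDerivAt (fun φ : ℝ => (Real.pi - φ) / (1 + 1/α)) (-1 / (1 + 1/α)) θ := by
      simpa using ((hasDerivAt_id θ).const_sub π).div_const (1 + 1/α)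
    have h3 := (hasDerivAt_sin θ).div (h2.sin.const_mul (1 + 1/α)) (by
      rw [hu]; positivity)
    refine HasDerivAt.congr_deriv (f := Th (1/α)) h3 ?_
    rw [hu, hTe, hDe]
    field_simp
    ring
  rw [(aux_deriv α θ D hT hD hα0).deriv, hu, ← hv]
  have hp : (Th (1/α) θ) ^ (1 - 2*α) * (Th (1/α) θ ^ α) ^ 2 = Th (1/α) θ := by
    rw [← rpow_natCast, ← rpow_mul hT.le, ← rpow_add hT]
    norm_num
    rw [show 1 - 2 * α + α * 2 = 1 by ring, rpow_one]
  have he : Complex.exp (-Complex.I * ((Real.pi - 2 * α * (Real.pi - θ) / (1 + α) : ℝ) : ℂ)) *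
      Complex.exp (-Complex.I * ((α * v : ℝ) : ℂ)) ^ 2 = -1 := by
    rw [← Complex.exp_nat_mul, ← Complex.exp_add]
    have : (Real.pi - 2 * α * (Real.pi - θ) / (1 + α)) = π - 2 * (α * v) := by rw [hv]; ring
    rw [this]
    have : -Complex.I * ((π - 2 * (α * v) : ℝ) : ℂ) + (2:ℕ) * (-Complex.I * ((α * v : ℝ) : ℂ))
      = -(π * Complex.I) := by push_cast; ring
    rw [this, Complex.exp_neg, Complex.exp_pi_mul_I]; norm_num
  have hE : Complex.exp (Complex.I * (v : ℂ)) = (cos v : ℂ) + (sin v : ℂ) * Complex.I := by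
    rw [mul_comm, Complex.exp_mul_I]; simp
  obtain ⟨T, hTT⟩ : ∃ T, T = Th (1/α) θ := ⟨_, rfl⟩
  rw [← hTT] at hT hTe hp ⊢
  set X := Complex.exp (-Complex.I * ((Real.pi - 2 * α * (Real.pi - θ) / (1 + α) : ℝ) : ℂ))
  set Y := Complex.exp (-Complex.I * ((α * v : ℝ) : ℂ))
  have key : ((((1 + α) / (4 * α^2) : ℝ)) : ℂ) * X * ((T ^ (1 - 2*α) : ℝ) : ℂ) *
      (-2 * α * ((T ^ α : ℝ) : ℂ) * Y * ((D : ℂ) + ((1 / (1 + α) : ℝ) : ℂ) * Complex.I)) ^ 2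
      = ((-((1 + α) * T) : ℝ) : ℂ) * ((D : ℂ) + ((1 / (1 + α) : ℝ) : ℂ) * Complex.I) ^ 2 := by
    have hpc : ((T ^ (1 - 2*α) : ℝ) : ℂ) * ((T ^ α : ℝ) : ℂ) ^ 2 = (T : ℂ) := by
      exact_mod_cast hp
    have hαc : (α : ℂ) ≠ 0 := by exact_mod_cast hα0.ne'
    have e1 : ((((1 + α) / (4 * α^2) : ℝ)) : ℂ) * (4 * (α:ℂ)^2) = 1 + α := by
      push_cast; field_simp
    generalize ((((1 + α) / (4 * α^2) : ℝ)) : ℂ) = q at *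
    generalize ((T ^ (1 - 2*α) : ℝ) : ℂ) = t1 at *
    generalize ((T ^ α : ℝ) : ℂ) = t2 at *
    generalize ((D : ℂ) + ((1 / (1 + α) : ℝ) : ℂ) * Complex.I) = L at *
    calc q * X * t1 * (-2 * α * t2 * Y * L) ^ 2
        = (q * (4 * (α:ℂ)^2)) * (X * Y ^ 2) * (t1 * t2 ^ 2) * L ^ 2 := by ring
      _ = _ := by rw [e1, he, hpc]; push_cast; ring
  rw [key, hE, Complex.div_re, ← add_div]
  apply div_neg_of_neg_of_pos
  · obtain ⟨b, hb⟩ : ∃ b, b = sin θ / (1 + α) := ⟨_, rfl⟩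
    have hF := aux_poly (sin v) b (cos (α * v)) (by rw [hb]; positivity)
      (by
        rw [hb, div_lt_iff₀ (by positivity)]
        have := aux_lt (1 + α) v (by linarith) hv0 (by nlinarith)
        rw [hθv, sin_pi_sub, show α * v + v = (1 + α) * v by ring]
        linarith)
      (by
        rw [hb, le_div_iff₀ (by positivity), hsv]
        have := aux_trig α v hα hv0.le hu1.le
        linarith) (cos_le_one _)
    have hpy := sin_sq_add_cos_sq (α * v)
    have hpv := sin_sq_add_cos_sq v
    have hD2 : D = (sin v - b * cos (α * v)) / (sin θ * sin (α * v)) := by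
      rw [hDe, hb, hcv]
      field_simp
      rw [hsv]
      linear_combination ((1 + α) * sin v) * hpy
    have hc2 : cos v - T = (b - sin v * cos (α * v)) / sin (α * v) := by
      rw [hTe, hb]
      field_simp
      rw [hsv]
      ring
    have hk : 1 / (1 + α) = b / sin θ := by rw [hb]; field_simp
    have hfin : (D ^ 2 - (1 / (1 + α)) ^ 2) * (cos v - T) + 2 * D * (1 / (1 + α)) * sin v
      = (b ^ 3 * (2 * cos (α * v) ^ 2 - 1) - 3 * sin v * b ^ 2 * cos (α * v) + 3 * b * sin v ^ 2
        - sin v ^ 3 * cos (α * v)) / (sin θ ^ 2 * sin (α * v) ^ 3) := by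
      rw [hD2, hc2, hk]
      have hS2 : sin (α * v) ^ 2 = 1 - cos (α * v) ^ 2 := by linarith
      field_simp
      rw [hS2]
      ring
    have hpos : 0 < (D ^ 2 - (1 / (1 + α)) ^ 2) * (cos v - T) + 2 * D * (1 / (1 + α)) * sin v := by
      rw [hfin]; positivity
    have := mul_pos (mul_pos (by linarith : 0 < 1 + α) hT) hpos
    simp only [pow_two, Complex.mul_re, Complex.mul_im, Complex.add_re, Complex.add_im,
      Complex.sub_re, Complex.sub_im, Complex.ofReal_re, Complex.ofReal_im, Complex.I_re,
      Complex.I_im]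
    refine lt_of_eq_of_lt (b := -((1 + α) * T * ((D ^ 2 - (1 / (1 + α)) ^ 2) * (cos v - T) +
      2 * D * (1 / (1 + α)) * sin v))) ?_ (by linarith)
    ring
  · rw [Complex.normSq_pos]
    intro h
    have := congrArg Complex.im h
    simp at this
    rw [← Complex.ofReal_sin, Complex.ofReal_re] at this
    linarith
end

section
/- For any real α > 0 and θ ∈ (0, π), the complex number e^{−i(π−θ)/(1+1/α)} − Θ_α(θ) is nonzero and (e^{i(π−θ)/(1+α)} − Θ_{1/α}(θ)) / (e^{−i(π−θ)/(1+1/α)} − Θ_α(θ)) = − sin((π−θ)/(1+α)) / sin((π−θ)/(1+1/α)). -/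
open Real

theorem stmt11 (α θ : ℝ) (hα : 0 < α) (hθ : θ ∈ Set.Ioo 0 Real.pi) :
    Complex.exp (-Complex.I * (((Real.pi - θ) / (1 + 1/α) : ℝ) : ℂ)) - ((Th α θ : ℝ) : ℂ) ≠ 0 ∧
    (Complex.exp (Complex.I * (((Real.pi - θ) / (1 + α) : ℝ) : ℂ)) - ((Th (1/α) θ : ℝ) : ℂ)) /
      (Complex.exp (-Complex.I * (((Real.pi - θ) / (1 + 1/α) : ℝ) : ℂ)) - ((Th α θ : ℝ) : ℂ)) =
    -(((Real.sin ((Real.pi - θ) / (1 + α)) / Real.sin ((Real.pi - θ) / (1 + 1/α)) : ℝ)) : ℂ) := by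
  obtain ⟨h0, h1⟩ := hθ
  have hp : 0 < Real.pi - θ := by linarith
  have hia : 0 < 1 / α := by positivity
  unfold Th
  have hab : (Real.pi - θ) / (1 + α) + (Real.pi - θ) / (1 + 1/α) = Real.pi - θ := by
    field_simp
    ring
  have ha0 : 0 < (Real.pi - θ) / (1 + α) := by positivity
  have hb0 : 0 < (Real.pi - θ) / (1 + 1/α) := by positivity
  have hk : 1 / (1 + α) + 1 / (1 + 1/α) = 1 := by
    field_simp
    ring
  have hk1 : 1 + α ≠ 0 := by positivity
  have hk2 : 1 + 1/α ≠ 0 := by positivity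
  generalize (Real.pi - θ) / (1 + α) = a at *
  generalize (Real.pi - θ) / (1 + 1/α) = b at *
  generalize 1 + 1/α = l at *
  generalize 1 + α = k at *
  have hsa : 0 < Real.sin a := Real.sin_pos_of_pos_of_lt_pi ha0 (by linarith)
  have hsb : 0 < Real.sin b := Real.sin_pos_of_pos_of_lt_pi hb0 (by linarith)
  have hs : Real.sin θ = Real.sin a * Real.cos b + Real.cos a * Real.sin b := by
    rw [← Real.sin_add, hab, Real.sin_pi_sub]
  have ea : Complex.exp (Complex.I * (a : ℂ)) = (Real.cos a : ℂ) + (Real.sin a : ℂ) * Complex.I := by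
    rw [mul_comm, Complex.exp_mul_I]
    push_cast
    rfl
  have eb : Complex.exp (-Complex.I * (b : ℂ)) = (Real.cos b : ℂ) - (Real.sin b : ℂ) * Complex.I := by
    rw [show -Complex.I * (b : ℂ) = (-(b : ℂ)) * Complex.I by ring, Complex.exp_mul_I,
      Complex.cos_neg, Complex.sin_neg]
    push_cast
    ring
  rw [ea, eb]
  have hne : (Real.cos b : ℂ) - (Real.sin b : ℂ) * Complex.I
      - ((Real.sin θ / (k * Real.sin a) : ℝ) : ℂ) ≠ 0 := by
    intro h
    have h2 := congrArg Complex.im h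
    simp only [Complex.sub_im, Complex.ofReal_im, Complex.im_ofReal_mul, Complex.I_im,
      Complex.zero_im] at h2
    linarith
  refine ⟨hne, ?_⟩
  rw [div_eq_iff hne]
  have e1 : Real.cos a - Real.sin θ / (l * Real.sin b)
      = -(Real.sin a / Real.sin b) * (Real.cos b - Real.sin θ / (k * Real.sin a)) := by
    have e2 : Real.sin θ / (l * Real.sin b) = Real.sin θ * (1 / l) / Real.sin b := by
      field_simp
    have e3 : Real.sin θ / (k * Real.sin a) = Real.sin θ * (1 / k) / Real.sin a := by
      field_simp
    rw [e2, e3, show 1 / l = 1 - 1 / k by linarith, hs]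
    field_simp
    ring
  have e4 : Real.sin a = Real.sin a / Real.sin b * Real.sin b := by
    field_simp
  have c1 := congrArg (fun x : ℝ => (x : ℂ)) e1
  have c4 := congrArg (fun x : ℝ => (x : ℂ)) e4
  simp only [Complex.ofReal_sub, Complex.ofReal_mul, Complex.ofReal_neg] at c1 c4
  linear_combination c1 + Complex.I * c4
end

section
/- Fix a real α > 0 and define d(φ) := (1+α)·cot φ + α·cot((π−φ)/(1+1/α)) for φ ∈ (0, π). Then d is strictly decreasing on (0, π), d(φ) → +∞ as φ → 0⁺, and d(φ) → 0 as φ → π⁻. Consequently, there exists a unique φ₀ ∈ (0, π) with d(φ₀) = 1. -/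
open Real Filter Set Topology

/-- `dfun α φ = (1+α)·cot φ + α·cot((π−φ)/(1+1/α))`. -/
noncomputable def dfun (α φ : ℝ) : ℝ :=
  (1 + α) * Real.cot φ + α * Real.cot ((Real.pi - φ) / (1 + 1/α))

lemma hasDerivAt_cot_aux {x : ℝ} (h : sin x ≠ 0) :
    HasDerivAt Real.cot (-(1 / sin x ^ 2)) x := by
  have h1 := (Real.hasDerivAt_cos x).div (Real.hasDerivAt_sin x) h
  have h2 : (Real.cos / Real.sin) = Real.cot := by
    funext y; simp [Real.cot_eq_cos_div_sin]
  rw [h2] at h1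
  have e : (-sin x * sin x - cos x * cos x) / sin x ^ 2 = -(1 / sin x ^ 2) := by
    rw [← neg_div]
    congr 1
    nlinarith [Real.sin_sq_add_cos_sq x]
  rw [e] at h1
  exact h1

lemma cot_sub_inv_tendsto :
    Tendsto (fun x : ℝ => Real.cot x - 1 / x) (𝓝[>] 0) (𝓝 0) := by
  have hlim : Tendsto (fun x : ℝ => π / 4 * x) (𝓝[>] 0) (𝓝 0) := by
    have : Tendsto (fun x : ℝ => π / 4 * x) (𝓝 0) (𝓝 (π / 4 * 0)) :=
      (continuous_const.mul continuous_id).tendsto 0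
    rw [mul_zero] at this
    exact this.mono_left nhdsWithin_le_nhds
  refine squeeze_zero_norm' ?_ hlim
  have hmem : Ioo (0:ℝ) 1 ∈ 𝓝[>] (0:ℝ) := Ioo_mem_nhdsGT one_pos
  filter_upwards [hmem] with x hx
  obtain ⟨h0, h1⟩ := hx
  have hpi := Real.pi_gt_three
  have hs : 0 < sin x := Real.sin_pos_of_pos_of_lt_pi h0 (by linarith)
  have a1 : sin x ≤ x := Real.sin_le h0.le
  have a2 := Real.one_sub_sq_div_two_le_cos (x := x)
  have a3 : x - x ^ 3 / 6 < sin x := Real.sin_gt_sub_cube h0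
  have a4 : 2 / π * x ≤ sin x := Real.mul_le_sin h0.le (by linarith)
  have a5 := Real.cos_le_one x
  have e : Real.cot x - 1 / x = (x * cos x - sin x) / (x * sin x) := by
    rw [Real.cot_eq_cos_div_sin]; field_simp
  have hnum : |x * cos x - sin x| ≤ x ^ 3 / 2 := by
    rw [abs_le]
    have : 0 < x ^ 3 := by positivity
    constructor
    · nlinarith [mul_le_mul_of_nonneg_left a2 h0.le]
    · nlinarith [mul_le_mul_of_nonneg_left a5 h0.le]
  rw [e, Real.norm_eq_abs, abs_div, abs_of_pos (mul_pos h0 hs), div_le_iff₀ (mul_pos h0 hs)]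
  refine hnum.trans ?_
  have : π / 4 * x * (x * (2 / π * x)) ≤ π / 4 * x * (x * sin x) := by gcongr
  have e2 : π / 4 * x * (x * (2 / π * x)) = x ^ 3 / 2 := by field_simp; norm_num
  linarith

lemma dfun_eq (α φ : ℝ) (hα : 0 < α) :
    dfun α φ = (1 + α) * Real.cot φ + α * Real.cot (α / (1 + α) * (π - φ)) := by
  unfold dfun
  have : (π - φ) / (1 + 1/α) = α / (1 + α) * (π - φ) := by
    have : 1 + α ≠ 0 := by positivity
    have : 1 + 1 / α ≠ 0 := by positivity
    field_simp
    ring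
  rw [this]

lemma sin_mul_gt {k t : ℝ} (hk0 : 0 < k) (hk1 : k < 1) (h0 : 0 < t) (h1 : t < π) :
    k * sin t < sin (k * t) := by
  have := strictConcaveOn_sin_Icc.2 (⟨le_rfl, Real.pi_pos.le⟩ : (0:ℝ) ∈ Icc 0 π)
    (⟨h0.le, h1.le⟩ : t ∈ Icc 0 π) h0.ne (sub_pos.2 hk1) hk0 (by ring)
  simpa using this

lemma sin_k_pos {k t : ℝ} (hk0 : 0 < k) (hk1 : k < 1) (h0 : 0 < t) (h1 : t ≤ π) :
    0 < sin (k * t) :=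
  Real.sin_pos_of_pos_of_lt_pi (by positivity) (by nlinarith)

lemma dfun_hasDerivAt (α : ℝ) (hα : 0 < α) {φ : ℝ} (h : φ ∈ Ioo 0 π) :
    ∃ d < 0, HasDerivAt (dfun α) d φ := by
  obtain ⟨h0, h1⟩ := h
  obtain ⟨k, hk⟩ : ∃ k, k = α / (1 + α) := ⟨_, rfl⟩
  have hk0 : 0 < k := by rw [hk]; positivity
  have hk1 : k < 1 := by rw [hk, div_lt_one (by positivity)]; linarith
  have hαk : α = (1 + α) * k := by rw [hk]; field_simp
  have hf : dfun α = fun φ => (1 + α) * Real.cot φ + α * Real.cot (k * (π - φ)) := by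
    funext y; rw [dfun_eq α y hα, hk]
  have hs : 0 < sin φ := Real.sin_pos_of_pos_of_lt_pi h0 h1
  have hs2 : 0 < sin (k * (π - φ)) := sin_k_pos hk0 hk1 (by linarith) (by linarith)
  have hlt := sin_mul_gt hk0 hk1 (t := π - φ) (by linarith) (by linarith)
  rw [Real.sin_pi_sub] at hlt
  have hin : HasDerivAt (fun φ => k * (π - φ)) (k * (-1)) φ :=
    ((hasDerivAt_id φ).const_sub π).const_mul k
  have d1 : HasDerivAt (fun φ => (1 + α) * Real.cot φ) ((1 + α) * -(1 / sin φ ^ 2)) φ :=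
    (hasDerivAt_cot_aux hs.ne').const_mul (1 + α)
  have d0 : HasDerivAt (fun φ => Real.cot (k * (π - φ)))
      (-(1 / sin (k * (π - φ)) ^ 2) * (k * -1)) φ :=
    HasDerivAt.comp φ (h₂ := Real.cot) (h := fun φ => k * (π - φ)) (hasDerivAt_cot_aux hs2.ne') hin
  have d2 : HasDerivAt (fun φ => α * Real.cot (k * (π - φ)))
      (α * (-(1 / sin (k * (π - φ)) ^ 2) * (k * -1))) φ := d0.const_mul α
  have d3 : HasDerivAt (fun φ => (1 + α) * Real.cot φ + α * Real.cot (k * (π - φ)))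
      ((1 + α) * -(1 / sin φ ^ 2) + α * (-(1 / sin (k * (π - φ)) ^ 2) * (k * -1))) φ :=
    d1.add d2
  rw [← hf] at d3
  refine ⟨_, ?_, d3⟩
  have e : (1 + α) * -(1 / sin φ ^ 2) + α * (-(1 / sin (k * (π - φ)) ^ 2) * (k * -1))
      = (1 + α) * (k ^ 2 / sin (k * (π - φ)) ^ 2 - 1 / sin φ ^ 2) := by
    generalize sin (k * (π - φ)) = s
    linear_combination (k / s ^ 2) * hαk
  rw [e]
  apply mul_neg_of_pos_of_neg (by positivity)
  rw [sub_neg, div_lt_div_iff₀ (by positivity) (by positivity), one_mul, ← mul_pow]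
  exact pow_lt_pow_left₀ hlt (by positivity) two_ne_zero

theorem stmt12 (α : ℝ) (hα : 0 < α) :
    StrictAntiOn (dfun α) (Set.Ioo 0 Real.pi) ∧
    Tendsto (dfun α) (𝓝[>] (0:ℝ)) atTop ∧
    Tendsto (dfun α) (𝓝[<] Real.pi) (𝓝 0) ∧
    ∃! φ₀, φ₀ ∈ Set.Ioo 0 Real.pi ∧ dfun α φ₀ = 1 := by
  have hcont : ContinuousOn (dfun α) (Ioo 0 π) := fun x hx => by
    obtain ⟨d, _, hd⟩ := dfun_hasDerivAt α hα hx
    exact hd.continuousAt.continuousWithinAt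
  have hanti : StrictAntiOn (dfun α) (Ioo 0 π) := by
    refine strictAntiOn_of_deriv_neg (convex_Ioo _ _) hcont fun x hx => ?_
    rw [interior_Ioo] at hx
    obtain ⟨d, hd0, hd⟩ := dfun_hasDerivAt α hα hx
    rwa [hd.deriv]
  obtain ⟨k, hk⟩ : ∃ k, k = α / (1 + α) := ⟨_, rfl⟩
  have hk0 : 0 < k := by rw [hk]; positivity
  have hk1 : k < 1 := by rw [hk, div_lt_one (by positivity)]; linarith
  have hαk : α = (1 + α) * k := by rw [hk]; field_simp
  have hf : dfun α = fun φ => (1 + α) * Real.cot φ + α * Real.cot (k * (π - φ)) := by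
    funext y; rw [dfun_eq α y hα, hk]
  have ht0 : Tendsto (dfun α) (𝓝[>] (0:ℝ)) atTop := by
    have hcot : Tendsto Real.cot (𝓝[>] (0:ℝ)) atTop := by
      have h1 : Tendsto (fun x : ℝ => x⁻¹) (𝓝[>] (0:ℝ)) atTop := tendsto_inv_nhdsGT_zero
      have := cot_sub_inv_tendsto.add_atTop h1
      refine this.congr fun x => ?_
      rw [one_div]; ring
    have h2 : Tendsto (fun φ => α * Real.cot (k * (π - φ))) (𝓝[>] (0:ℝ))
        (𝓝 (α * Real.cot (k * (π - 0)))) := by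
      have hc : ContinuousAt Real.cot (k * (π - 0)) :=
        (hasDerivAt_cot_aux (sin_k_pos hk0 hk1 (by linarith [Real.pi_pos]) (by linarith)).ne').continuousAt
      have hg : ContinuousAt (fun φ : ℝ => k * (π - φ)) 0 := by fun_prop
      have := (ContinuousAt.comp (f := fun φ : ℝ => k * (π - φ)) hc hg).tendsto.const_mul α
      exact this.mono_left nhdsWithin_le_nhds
    rw [hf]
    exact (hcot.const_mul_atTop (by positivity : 0 < 1 + α)).atTop_add h2
  have htpi : Tendsto (dfun α) (𝓝[<] π) (𝓝 0) := by
    have key : ∀ c : ℝ, 0 < c → Tendsto (fun φ : ℝ => c * (π - φ)) (𝓝[<] π) (𝓝[>] 0) := by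
      intro c hc
      refine tendsto_nhdsWithin_iff.2 ⟨?_, ?_⟩
      · have : Tendsto (fun φ : ℝ => c * (π - φ)) (𝓝 π) (𝓝 (c * (π - π))) :=
          (by fun_prop : Continuous fun φ : ℝ => c * (π - φ)).tendsto π
        rw [sub_self, mul_zero] at this
        exact this.mono_left nhdsWithin_le_nhds
      · filter_upwards [self_mem_nhdsWithin] with x hx
        exact mul_pos hc (sub_pos.2 hx)
    have A := (cot_sub_inv_tendsto.comp (key k hk0)).const_mul α
    have B := (cot_sub_inv_tendsto.comp (key 1 one_pos)).const_mul (1 + α)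
    have C := A.sub B
    simp only [mul_zero, sub_zero] at C
    refine C.congr' ?_
    filter_upwards [self_mem_nhdsWithin] with x hx
    have hx' : π - x ≠ 0 := (sub_pos.2 hx).ne'
    have hcot : Real.cot (π - x) = - Real.cot x := by
      rw [Real.cot_eq_cos_div_sin, Real.cot_eq_cos_div_sin, Real.cos_pi_sub, Real.sin_pi_sub, neg_div]
    rw [hf]
    simp only [Function.comp, one_mul, hcot]
    have : α * (1 / (k * (π - x))) = (1 + α) * (1 / (π - x)) := by
      field_simp
      linarith
    linear_combination -this
  refine ⟨hanti, ht0, htpi, ?_⟩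
  have hpi := Real.pi_pos
  obtain ⟨a, ha1, ha⟩ := ((ht0.eventually_gt_atTop 1).and (Ioo_mem_nhdsGT hpi)).exists
  obtain ⟨b, hb1, hb⟩ := ((htpi.eventually_lt_const one_pos).and (Ioo_mem_nhdsLT hpi)).exists
  obtain ⟨c, hc, hc1⟩ := isPreconnected_Ioo.intermediate_value hb ha hcont ⟨hb1.le, ha1.le⟩
  exact ⟨c, ⟨hc, hc1⟩, fun y hy => hanti.injOn hy.1 hc (hy.2.trans hc1.symm)⟩
end

section
/- For any real α > 0 and φ ∈ (0, π): (1+α)·Θ_{1/α}(φ)² − (1+2α)·Θ_{1/α}(φ)·cos((π−φ)/(1+α)) + α = (1+α)·D(φ)·sin((π−φ)/(1+α)), where D(φ) := [(1+1/α)·cos φ·sin((π−φ)/(1+1/α)) + sin φ·cos((π−φ)/(1+1/α))] / [(1+1/α)²·sin²((π−φ)/(1+1/α))] (which is the derivative of Θ_{1/α} at φ). -/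
open Real Set

theorem stmt14 (α : ℝ) (hα : 0 < α) (φ : ℝ) (hφ : φ ∈ Set.Ioo 0 Real.pi) :
    (1 + α) * (Th (1/α) φ)^2 -
        (1 + 2*α) * Th (1/α) φ * Real.cos ((Real.pi - φ) / (1 + α)) + α =
      (1 + α) *
        (((1 + 1/α) * Real.cos φ * Real.sin ((Real.pi - φ) / (1 + 1/α)) +
            Real.sin φ * Real.cos ((Real.pi - φ) / (1 + 1/α))) /
          ((1 + 1/α)^2 * Real.sin ((Real.pi - φ) / (1 + 1/α))^2)) *
        Real.sin ((Real.pi - φ) / (1 + α)) := by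
  obtain ⟨h0, h1⟩ := hφ
  have hc : (1 + 1/α) = (1 + α) / α := by field_simp; ring
  have ha1 : (1 + α) ≠ 0 := by positivity
  have hs : Real.sin ((Real.pi - φ) / (1 + 1/α)) ≠ 0 := by
    apply ne_of_gt
    have hg : 1 < 1 + 1/α := by
      have : 0 < 1/α := by positivity
      linarith
    apply Real.sin_pos_of_pos_of_lt_pi
    · exact div_pos (by linarith) (by linarith)
    · rw [div_lt_iff₀ (by linarith)]
      nlinarith [Real.pi_pos]
  have hsum : φ = Real.pi - ((Real.pi - φ) / (1 + α) + (Real.pi - φ) / (1 + 1/α)) := by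
    rw [hc]; field_simp; ring
  unfold Th
  generalize (Real.pi - φ) / (1 + 1/α) = B at *
  generalize (Real.pi - φ) / (1 + α) = A at *
  rw [hsum, Real.sin_pi_sub, Real.cos_pi_sub, Real.sin_add, Real.cos_add, hc]
  have hp := Real.sin_sq_add_cos_sq A
  generalize Real.sin A = a at *
  generalize Real.cos A = b at *
  generalize Real.sin B = s at *
  generalize Real.cos B = q at *
  have key : (a*q+b*s)^2*α - (1+2*α)*(a*q+b*s)*b*s + (1+α)*s^2
      = a*(-(1+α)*(b*q-a*s)*s + α*(a*q+b*s)*q) := by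
    linear_combination (-(1+α)*s^2) * hp
  have e1 : (1 + α) * ((a*q+b*s) / ((1+α)/α*s))^2 - (1+2*α) * ((a*q+b*s) / ((1+α)/α*s)) * b + α
      = α / ((1+α)*s^2) * ((a*q+b*s)^2*α - (1+2*α)*(a*q+b*s)*b*s + (1+α)*s^2) := by
    field_simp
  rw [e1, key]
  field_simp
  try ring
end

section
/- For any real α > 0 and φ ∈ (0, π): [(1+α)/sin φ] · (Θ_{1/α}(φ) − cos((π−φ)/(1+α))) = d(φ)·cos((π−φ)/(1+1/α)) − sin((π−φ)/(1+1/α)), where d(φ) := (1+α)·cot φ + α·cot((π−φ)/(1+1/α)). -/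
open Real Set

theorem stmt15 (α : ℝ) (hα : 0 < α) (φ : ℝ) (hφ : φ ∈ Set.Ioo 0 Real.pi) :
    ((1 + α) / Real.sin φ) * (Th (1/α) φ - Real.cos ((Real.pi - φ) / (1 + α))) =
      dfun α φ * Real.cos ((Real.pi - φ) / (1 + 1/α)) -
        Real.sin ((Real.pi - φ) / (1 + 1/α)) := by
  obtain ⟨h0, h1⟩ := hφ
  have hs : Real.sin φ ≠ 0 := (Real.sin_pos_of_pos_of_lt_pi h0 h1).ne'
  have h2 : (Real.pi - φ) / (1 + α) = Real.pi - (φ + (Real.pi - φ) / (1 + 1/α)) := by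
    field_simp
    ring
  have hp : 0 < 1 / α := by positivity
  have hb0 : 0 < (Real.pi - φ) / (1 + 1/α) := div_pos (by linarith) (by linarith)
  have hb1 : (Real.pi - φ) / (1 + 1/α) < Real.pi := by
    rw [div_lt_iff₀ (by linarith)]
    nlinarith [Real.pi_pos, mul_pos Real.pi_pos hp]
  have hsb := (Real.sin_pos_of_pos_of_lt_pi hb0 hb1).ne'
  rw [h2, Real.cos_pi_sub, Real.cos_add]
  unfold Th dfun
  rw [Real.cot_eq_cos_div_sin, Real.cot_eq_cos_div_sin]
  generalize (Real.pi - φ) / (1 + 1/α) = b at *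
  have hc : Real.cos b ^ 2 = 1 - Real.sin b ^ 2 := by
    linarith [Real.sin_sq_add_cos_sq b]
  have h3 : (1 + 1/α) = (1 + α) / α := by
    field_simp
    ring
  rw [h3]
  have h4 : 1 + α ≠ 0 := by positivity
  field_simp
  linear_combination (-α * Real.sin φ) * hc
end

section
/- Define λ(φ) := cos((π−φ)/(1+α))·sin((π−φ)/(1+1/α)) − α·sin((π−φ)/(1+α))·cos((π−φ)/(1+1/α)) for a real parameter α > 0 and φ ∈ (0, π). Then: (i) if α ≥ 1, then λ(φ) ≥ 0 for all φ ∈ (0, π); and (ii) if 0 < α < 1, then λ(φ) < 0 for all φ ∈ (0, π). -/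
open Real Set

/-- `lam α φ = cos((π−φ)/(1+α))·sin((π−φ)/(1+1/α)) − α·sin((π−φ)/(1+α))·cos((π−φ)/(1+1/α))`. -/
noncomputable def lam (α φ : ℝ) : ℝ :=
  Real.cos ((Real.pi - φ) / (1 + α)) * Real.sin ((Real.pi - φ) / (1 + 1/α)) -
    α * Real.sin ((Real.pi - φ) / (1 + α)) * Real.cos ((Real.pi - φ) / (1 + 1/α))

theorem aux_sin (t s : ℝ) (ht : 0 < t) (ht1 : t < 1) (hs : 0 < s) (hs1 : s < Real.pi) :
    t * Real.sin s < Real.sin (t * s) := by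
  have m0 : (0 : ℝ) ∈ Set.Icc 0 Real.pi := ⟨le_refl _, Real.pi_pos.le⟩
  have ms : s ∈ Set.Icc 0 Real.pi := ⟨hs.le, hs1.le⟩
  have h := strictConcaveOn_sin_Icc.2 m0 ms hs.ne (sub_pos.2 ht1) ht (by ring)
  simpa using h

theorem aux_lam (α φ : ℝ) (hα : 0 < α) :
    lam α φ = (1 + α) / 2 * (Real.sin ((α - 1) / (1 + α) * (Real.pi - φ))
      - (α - 1) / (1 + α) * Real.sin (Real.pi - φ)) := by
  have h1 : (1 + α) ≠ 0 := by positivity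
  obtain ⟨x, hx⟩ : ∃ x, x = (Real.pi - φ) / (1 + α) := ⟨_, rfl⟩
  obtain ⟨y, hy⟩ : ∃ y, y = (Real.pi - φ) / (1 + 1 / α) := ⟨_, rfl⟩
  have hy' : y = α * x := by rw [hy, hx]; field_simp; ring
  have hs : Real.pi - φ = y + x := by rw [hy', hx]; field_simp; ring
  have hd : (α - 1) / (1 + α) * (Real.pi - φ) = y - x := by rw [hy', hx]; field_simp
  unfold lam
  rw [← hx, ← hy, hd, hs, Real.sin_add, Real.sin_sub]
  field_simp
  ring

theorem stmt17 (α : ℝ) (hα : 0 < α) :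
    (1 ≤ α → ∀ φ ∈ Set.Ioo 0 Real.pi, 0 ≤ lam α φ) ∧
    (α < 1 → ∀ φ ∈ Set.Ioo 0 Real.pi, lam α φ < 0) := by
  have h1 : 0 < 1 + α := by positivity
  constructor
  · rintro h φ ⟨h0, hp⟩
    rw [aux_lam α φ hα]
    rcases h.eq_or_lt with rfl | h
    · simp
    · have := aux_sin ((α - 1) / (1 + α)) (Real.pi - φ) (div_pos (by linarith) h1)
        ((div_lt_one h1).2 (by linarith)) (by linarith) (by linarith)
      exact mul_nonneg (by positivity) (by linarith)
  · rintro h φ ⟨h0, hp⟩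
    rw [aux_lam α φ hα]
    have := aux_sin ((1 - α) / (1 + α)) (Real.pi - φ) (div_pos (by linarith) h1)
        ((div_lt_one h1).2 (by linarith)) (by linarith) (by linarith)
    have e : (α - 1) / (1 + α) = -((1 - α) / (1 + α)) := by ring
    rw [e, neg_mul, Real.sin_neg]
    exact mul_neg_of_pos_of_neg (by positivity) (by linarith)
end

section
/- Fix a real α ≥ 1. For φ ∈ (0, π) define u(φ) := [2·sin((π−φ)/(1+α))/(1+α)] · Θ_{1/α}(φ)^{2α+1} · (d(φ)² − 1), w(φ) := [2·sin φ/(1+α)²] · Θ_{1/α}(φ)^{4α+1} · [ (d(φ)² − 1)·cos((π−φ)/(1+1/α)) − 2·d(φ)·sin((π−φ)/(1+1/α)) ], and s(φ) := Θ_{1/α}(φ)^α · Θ_α(φ). Then for every φ ∈ (0, π), either u(φ) = 0 and w(φ) ≠ 0, or u(φ) ≠ 0 and w(φ)/(u(φ)·s(φ)) ∉ (0, 1). -/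
open Real Set

/-- `ufun α φ = [2·sin((π−φ)/(1+α))/(1+α)] · Θ_{1/α}(φ)^{2α+1} · (d(φ)² − 1)`. -/
noncomputable def ufun (α φ : ℝ) : ℝ :=
  (2 * Real.sin ((Real.pi - φ) / (1 + α)) / (1 + α)) * (Th (1/α) φ) ^ (2*α + 1) *
    ((dfun α φ)^2 - 1)

/-- `wfun α φ = [2·sin φ/(1+α)²] · Θ_{1/α}(φ)^{4α+1} ·
    [(d(φ)² − 1)·cos((π−φ)/(1+1/α)) − 2·d(φ)·sin((π−φ)/(1+1/α))]`. -/
noncomputable def wfun (α φ : ℝ) : ℝ :=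
  (2 * Real.sin φ / (1 + α)^2) * (Th (1/α) φ) ^ (4*α + 1) *
    (((dfun α φ)^2 - 1) * Real.cos ((Real.pi - φ) / (1 + 1/α)) -
      2 * dfun α φ * Real.sin ((Real.pi - φ) / (1 + 1/α)))

/-- `sfun α φ = Θ_{1/α}(φ)^α · Θ_α(φ)`. -/
noncomputable def sfun (α φ : ℝ) : ℝ := (Th (1/α) φ) ^ α * Th α φ

noncomputable def dd (a x : ℝ) : ℝ :=
  (a * (Real.cos (a * x) / Real.sin (a * x)) - Real.cos x / Real.sin x) / (1 - a)

noncomputable def tt (a x : ℝ) : ℝ := a * Real.sin x / Real.sin (a * x)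

noncomputable def qq (a x : ℝ) : ℝ :=
  Real.cos (a * x) + 2 * dd a x * Real.sin (a * x) / (1 - dd a x ^ 2)

lemma sin_concave {t x : ℝ} (ht : 0 ≤ t) (ht1 : t ≤ 1) (hx : 0 ≤ x) (hx1 : x ≤ π) :
    t * Real.sin x ≤ Real.sin (t * x) := by
  have h := strictConcaveOn_sin_Icc.concaveOn.2 (show (0:ℝ) ∈ Icc 0 π from ⟨le_refl _, pi_pos.le⟩)
    (show x ∈ Icc 0 π from ⟨hx, hx1⟩) (show 0 ≤ 1 - t by linarith) ht (by ring)
  simpa using h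

lemma sin_pos_x {x : ℝ} (hx : x ∈ Ioo 0 π) : 0 < Real.sin x :=
  Real.sin_pos_of_pos_of_lt_pi hx.1 hx.2

lemma ax_mem {a x : ℝ} (ha : 1 / 2 ≤ a) (ha1 : a < 1) (hx : x ∈ Ioo 0 π) : a * x ∈ Ioo 0 π := by
  obtain ⟨h0, h1⟩ := hx
  constructor
  · have : 0 < a := by linarith
    positivity
  · nlinarith

lemma dd_nonneg {a x : ℝ} (ha : 1 / 2 ≤ a) (ha1 : a < 1) (hx : x ∈ Ioo 0 π) : 0 ≤ dd a x := by
  have hs := sin_pos_x hx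
  have hA := sin_pos_x (ax_mem ha ha1 hx)
  obtain ⟨h0, h1⟩ := hx
  have key : (1 - a) * Real.sin ((1 + a) * x) ≤ (1 + a) * Real.sin ((1 - a) * x) := by
    have hB : 0 ≤ Real.sin ((1 - a) * x) :=
      Real.sin_nonneg_of_nonneg_of_le_pi (by nlinarith) (by nlinarith)
    rcases le_total ((1 + a) * x) π with h | h
    · have := sin_concave (t := (1 - a) / (1 + a)) (x := (1 + a) * x)
        (div_nonneg (by linarith) (by linarith)) (by rw [div_le_one (by linarith)]; linarith)
        (by nlinarith) h
      have e : (1 - a) / (1 + a) * ((1 + a) * x) = (1 - a) * x := by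
        have : 1 + a ≠ 0 := by linarith
        field_simp
      rw [e, div_mul_eq_mul_div, div_le_iff₀ (by linarith)] at this
      linarith
    · have : Real.sin ((1 + a) * x) ≤ 0 := by
        have := Real.sin_nonneg_of_nonneg_of_le_pi (x := (1 + a) * x - π) (by linarith)
          (by nlinarith)
        rw [Real.sin_sub_pi] at this
        linarith
      nlinarith
  have e : dd a x = (a * Real.sin x * Real.cos (a * x) - Real.cos x * Real.sin (a * x)) /
      ((1 - a) * (Real.sin x * Real.sin (a * x))) := by
    unfold dd
    have : 1 - a ≠ 0 := by linarith
    field_simp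
  rw [e]
  apply div_nonneg
  · have e1 : (1 + a) * x = x + a * x := by ring
    have e2 : (1 - a) * x = x - a * x := by ring
    rw [e1, e2, Real.sin_add, Real.sin_sub] at key
    linarith
  · have : 0 < 1 - a := by linarith
    positivity

lemma dd_cot {a x : ℝ} (ha : 1 / 2 ≤ a) (ha1 : a < 1) (hx : x ∈ Ioo 0 π) :
    dd a x * (Real.cos (a * x) / Real.sin (a * x)) ≤ 1 := by
  have hs := sin_pos_x hx
  have hA := sin_pos_x (ax_mem ha ha1 hx)
  obtain ⟨h0, h1⟩ := hx
  have key := sin_concave (t := 2 * a - 1) (x := x) (by linarith) (by linarith) h0.le h1.le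
  have e : dd a x * (Real.cos (a * x) / Real.sin (a * x)) =
     ((a * Real.sin x * Real.cos (a * x) - Real.cos x * Real.sin (a * x)) * Real.cos (a * x)) /
      ((1 - a) * (Real.sin x * Real.sin (a * x) ^ 2)) := by
    unfold dd
    have : 1 - a ≠ 0 := by linarith
    field_simp
  have h1a : 0 < 1 - a := by linarith
  rw [e, div_le_one (by positivity)]
  have e1 : (2 * a - 1) * x = 2 * (a * x) - x := by ring
  rw [e1, Real.sin_sub, Real.sin_two_mul, Real.cos_two_mul] at key
  have hc := Real.sin_sq_add_cos_sq (a * x)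
  have hc' : Real.cos (a * x) ^ 2 = 1 - Real.sin (a * x) ^ 2 := by linarith
  rw [hc'] at key
  have : (a * Real.sin x * Real.cos (a * x) - Real.cos x * Real.sin (a * x)) * Real.cos (a * x)
    = a * Real.sin x * (1 - Real.sin (a * x) ^ 2)
      - Real.cos x * Real.sin (a * x) * Real.cos (a * x) := by
    rw [← hc']; ring
  rw [this]
  linarith

lemma hasDeriv_sin (a x : ℝ) : HasDerivAt (fun y => Real.sin (a * y)) (Real.cos (a * x) * a) x := by
  simpa using ((hasDerivAt_id x).const_mul a).sin

lemma hasDeriv_cos (a x : ℝ) :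
    HasDerivAt (fun y => Real.cos (a * y)) (-Real.sin (a * x) * a) x := by
  simpa using ((hasDerivAt_id x).const_mul a).cos

lemma dd_deriv {a x : ℝ} (ha : 1 / 2 ≤ a) (ha1 : a < 1) (hx : x ∈ Ioo 0 π) :
    HasDerivAt (dd a) (1 + a + (1 - a) * dd a x ^ 2
      - 2 * a * (dd a x * (Real.cos (a * x) / Real.sin (a * x)))) x := by
  have hs := sin_pos_x hx
  have hA := sin_pos_x (ax_mem ha ha1 hx)
  have h1 := (((hasDeriv_cos a x).div (hasDeriv_sin a x) hA.ne').const_mul a).sub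
    ((Real.hasDerivAt_cos x).div (Real.hasDerivAt_sin x) hs.ne')
  have h2 := h1.div_const (1 - a)
  refine HasDerivAt.congr_deriv (f := dd a) h2 ?_
  unfold dd
  have h1a : 1 - a ≠ 0 := by linarith
  have hc : Real.cos (a * x) ^ 2 = 1 - Real.sin (a * x) ^ 2 := by
    linarith [Real.sin_sq_add_cos_sq (a * x)]
  have hc' : Real.cos x ^ 2 = 1 - Real.sin x ^ 2 := by linarith [Real.sin_sq_add_cos_sq x]
  field_simp
  ring_nf
  try ring

lemma tt_deriv {a x : ℝ} (ha : 1 / 2 ≤ a) (ha1 : a < 1) (hx : x ∈ Ioo 0 π) :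
    HasDerivAt (tt a) (tt a x * (-(1 - a) * dd a x)) x := by
  have hs := sin_pos_x hx
  have hA := sin_pos_x (ax_mem ha ha1 hx)
  have h1 := ((Real.hasDerivAt_sin x).const_mul a).div (hasDeriv_sin a x) hA.ne'
  refine HasDerivAt.congr_deriv (f := tt a) h1 ?_
  unfold tt dd
  have h1a : 1 - a ≠ 0 := by linarith
  field_simp
  ring

lemma tt_pos {a x : ℝ} (ha : 1 / 2 ≤ a) (ha1 : a < 1) (hx : x ∈ Ioo 0 π) : 0 < tt a x := by
  have hs := sin_pos_x hx
  have hA := sin_pos_x (ax_mem ha ha1 hx)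
  unfold tt
  have : 0 < a := by linarith
  positivity

lemma dd_mono {a : ℝ} (ha : 1 / 2 ≤ a) (ha1 : a < 1) : MonotoneOn (dd a) (Ioo 0 π) := by
  apply monotoneOn_of_deriv_nonneg (convex_Ioo _ _)
  · intro x hx
    exact (dd_deriv ha ha1 hx).continuousAt.continuousWithinAt
  · intro x hx
    rw [interior_Ioo] at hx
    exact (dd_deriv ha ha1 hx).differentiableAt.differentiableWithinAt
  · intro x hx
    rw [interior_Ioo] at hx
    rw [(dd_deriv ha ha1 hx).deriv]
    have := dd_cot ha ha1 hx
    nlinarith [sq_nonneg (dd a x)]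

lemma rr_deriv_s18 {a x α : ℝ} (ha : 1 / 2 ≤ a) (ha1 : a < 1) (hα : α * (1 - a) = a)
    (hx : x ∈ Ioo 0 π) (hd : dd a x < 1) :
    ∃ r, 0 ≤ r ∧ HasDerivAt (fun y => tt a y ^ α * qq a y) r x := by
  have hA := sin_pos_x (ax_mem ha ha1 hx)
  have hT := tt_pos ha ha1 hx
  have h0 := dd_nonneg ha ha1 hx
  have hc := dd_cot ha ha1 hx
  have hdd := dd_deriv ha ha1 hx
  have hne : 0 < 1 - dd a x ^ 2 := by nlinarith
  have hq := (hasDeriv_cos a x).add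
    (((hdd.const_mul 2).mul (hasDeriv_sin a x)).div ((hdd.pow 2).const_sub 1) hne.ne')
  have ht := (tt_deriv ha ha1 hx).rpow_const (p := α) (Or.inl hT.ne')
  have hr := ht.mul hq
  refine ⟨_, ?_, hr⟩
  have e1 : tt a x * (-(1 - a) * dd a x) * α * tt a x ^ (α - 1) = tt a x ^ α * (-a * dd a x) := by
    rw [Real.rpow_sub_one hT.ne']
    have h2 : tt a x * (-(1 - a) * dd a x) * α * (tt a x ^ α / tt a x)
        = tt a x ^ α * (-(α * (1 - a)) * dd a x) := by
      field_simp
    rw [h2, hα]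
  rw [e1]
  simp only [Pi.add_apply, Pi.mul_apply, Pi.div_apply, Pi.pow_apply]
  generalize hcc : Real.cos (a * x) / Real.sin (a * x) = c at *
  have hcos : Real.cos (a * x) = c * Real.sin (a * x) := by rw [← hcc]; field_simp
  rw [hcos]
  generalize dd a x = d at *
  generalize Real.sin (a * x) = S at *
  have hTp : 0 < tt a x ^ α := Real.rpow_pos_of_pos hT _
  generalize tt a x ^ α = P at *
  have key : 0 ≤ 2 + a + (2 - a) * d ^ 2 - 3 * a * (d * c) - a * (d * c) * d ^ 2 := by
    have h1 : 0 ≤ a * (1 - d * c) := mul_nonneg (by linarith) (by linarith)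
    have h2 : 0 ≤ a * (1 - d * c) * d ^ 2 := by positivity
    have h3 : 0 ≤ (1 - a) * d ^ 2 := mul_nonneg (by linarith) (by positivity)
    nlinarith
  have : 0 ≤ P * S * (1 + d ^ 2) / (1 - d ^ 2) ^ 2 *
    (2 + a + (2 - a) * d ^ 2 - 3 * a * (d * c) - a * (d * c) * d ^ 2) := by positivity
  refine this.trans_eq ?_
  field_simp
  ring

lemma rr_ge {a x α : ℝ} (ha : 1 / 2 ≤ a) (ha1 : a < 1) (hα0 : 0 ≤ α) (hα : α * (1 - a) = a)
    (hx : x ∈ Ioo 0 π) (hd : dd a x < 1) : 1 ≤ tt a x ^ α * qq a x := by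
  have hsub : ∀ y ∈ Ioc 0 x, y ∈ Ioo 0 π ∧ dd a y < 1 := by
    intro y hy
    have hy' : y ∈ Ioo 0 π := ⟨hy.1, hy.2.trans_lt hx.2⟩
    exact ⟨hy', (dd_mono ha ha1 hy' hx hy.2).trans_lt hd⟩
  have hmono : MonotoneOn (fun y => tt a y ^ α * qq a y) (Ioc 0 x) := by
    apply monotoneOn_of_deriv_nonneg (convex_Ioc _ _)
    · intro y hy
      obtain ⟨r, _, h⟩ := rr_deriv_s18 ha ha1 hα (hsub y hy).1 (hsub y hy).2
      exact h.continuousAt.continuousWithinAt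
    · intro y hy
      have hy := interior_subset hy
      obtain ⟨r, _, h⟩ := rr_deriv_s18 ha ha1 hα (hsub y hy).1 (hsub y hy).2
      exact h.differentiableAt.differentiableWithinAt
    · intro y hy
      have hy := interior_subset hy
      obtain ⟨r, h0, h⟩ := rr_deriv_s18 ha ha1 hα (hsub y hy).1 (hsub y hy).2
      rw [h.deriv]
      exact h0
  have hlim : Filter.Tendsto (fun y => Real.sinc y ^ α * Real.cos (a * y))
      (nhdsWithin 0 (Ioi 0)) (nhds 1) := by
    have h1 : Filter.Tendsto (fun y => Real.sinc y ^ α * Real.cos (a * y)) (nhds 0)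
        (nhds (Real.sinc 0 ^ α * Real.cos (a * 0))) := by
      apply Filter.Tendsto.mul
      · exact (Real.continuous_sinc.tendsto 0).rpow_const (Or.inr hα0)
      · exact (by fun_prop : Continuous fun y => Real.cos (a * y)).tendsto 0
    simp at h1
    exact h1.mono_left nhdsWithin_le_nhds
  refine le_of_tendsto hlim ?_
  have hev : ∀ᶠ y in nhdsWithin (0:ℝ) (Ioi 0), y ∈ Ioo 0 (min x 1) :=
    Ioo_mem_nhdsGT (lt_min hx.1 one_pos)
  filter_upwards [hev] with y hy
  have hyx : y < x := hy.2.trans_le (min_le_left _ _)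
  have hy1 : y < 1 := hy.2.trans_le (min_le_right _ _)
  have hy0 : 0 < y := hy.1
  have hmem : y ∈ Ioc 0 x := ⟨hy0, hyx.le⟩
  obtain ⟨hyp, hdy⟩ := hsub y hmem
  refine le_trans ?_ (hmono hmem ⟨hx.1, le_refl _⟩ hyx.le)
  have hA := sin_pos_x (ax_mem ha ha1 hyp)
  have hs := sin_pos_x hyp
  have h0 := dd_nonneg ha ha1 hyp
  have hne : 0 < 1 - dd a y ^ 2 := by nlinarith
  have ha0 : 0 < a := by linarith
  have hay : a * y < 1 := by nlinarith
  have hcos : 0 ≤ Real.cos (a * y) :=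
    Real.cos_nonneg_of_neg_pi_div_two_le_of_le (by nlinarith [pi_pos]) (by linarith [pi_gt_three])
  have hq : Real.cos (a * y) ≤ qq a y := by
    unfold qq
    have : 0 ≤ 2 * dd a y * Real.sin (a * y) / (1 - dd a y ^ 2) := by positivity
    linarith
  have hsc : Real.sinc y = Real.sin y / y := Real.sinc_of_ne_zero hy0.ne'
  have ht : Real.sinc y ≤ tt a y := by
    rw [hsc]
    unfold tt
    rw [div_le_div_iff₀ hy0 hA]
    have := Real.sin_le (x := a * y) (by positivity)
    nlinarith
  have hsc0 : 0 ≤ Real.sinc y := by rw [hsc]; positivity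
  have := Real.rpow_le_rpow hsc0 ht hα0
  have hp : 0 ≤ Real.sinc y ^ α := Real.rpow_nonneg hsc0 _
  exact mul_le_mul this hq hcos (hp.trans this)

theorem stmt18 (α : ℝ) (hα : 1 ≤ α) :
    ∀ φ ∈ Set.Ioo 0 Real.pi,
      (ufun α φ = 0 ∧ wfun α φ ≠ 0) ∨
      (ufun α φ ≠ 0 ∧ wfun α φ / (ufun α φ * sfun α φ) ∉ Set.Ioo (0:ℝ) 1) := by
  intro φ hφ
  have hα0 : 0 < α := by linarith
  obtain ⟨a, ha_def⟩ : ∃ a, a = α / (1 + α) := ⟨_, rfl⟩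
  obtain ⟨x, hx_def⟩ : ∃ x, x = π - φ := ⟨_, rfl⟩
  have hx : x ∈ Ioo 0 π := ⟨by linarith [hφ.2], by linarith [hφ.1]⟩
  have ha : 1 / 2 ≤ a := by
    rw [ha_def, div_le_div_iff₀ (by norm_num) (by linarith)]; linarith
  have ha1 : a < 1 := by rw [ha_def, div_lt_one (by linarith)]; linarith
  have h1a : 1 - a = 1 / (1 + α) := by rw [ha_def]; field_simp; ring
  have hαa : α * (1 - a) = a := by rw [h1a, ha_def]; ring
  have hA := sin_pos_x (ax_mem ha ha1 hx)
  have hs := sin_pos_x hx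
  have hT := tt_pos ha ha1 hx
  have h0 := dd_nonneg ha ha1 hx
  have hc := dd_cot ha ha1 hx
  have hφx : φ = π - x := by linarith
  have eA : (π - φ) / (1 + 1 / α) = a * x := by
    rw [← hx_def, ha_def]; field_simp; ring
  have eB : (π - φ) / (1 + α) = (1 - a) * x := by
    rw [← hx_def, h1a]; ring
  have hsφ : Real.sin φ = Real.sin x := by rw [hφx, Real.sin_pi_sub]
  have hcφ : Real.cos φ = -Real.cos x := by rw [hφx, Real.cos_pi_sub]
  have hB : 0 < Real.sin ((1 - a) * x) :=
    Real.sin_pos_of_pos_of_lt_pi (mul_pos (by linarith) hx.1) (by nlinarith [hx.1, hx.2])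
  have eT : Th (1 / α) φ = tt a x := by
    unfold Th tt
    rw [eA, hsφ, ha_def]
    field_simp
    try ring
  have eTa : Th α φ = Real.sin x / ((1 + α) * Real.sin ((1 - a) * x)) := by
    unfold Th
    rw [eB, hsφ]
  have ed : dfun α φ = dd a x := by
    unfold dfun dd
    rw [eA, Real.cot_eq_cos_div_sin, Real.cot_eq_cos_div_sin, hsφ, hcφ, h1a]
    have : a * (1 + α) = α := by rw [ha_def]; field_simp
    field_simp
    linear_combination (-(Real.sin x * Real.cos (a * x))) * this
  have hP1 : 0 < tt a x ^ (2 * α + 1) := Real.rpow_pos_of_pos hT _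
  have hP2 : 0 < tt a x ^ (4 * α + 1) := Real.rpow_pos_of_pos hT _
  have hP3 : 0 < tt a x ^ α := Real.rpow_pos_of_pos hT _
  unfold ufun wfun sfun
  rw [eT, eTa, ed, eA, eB, hsφ]
  by_cases hd : dd a x = 1
  · left
    rw [hd]
    refine ⟨by ring, ?_⟩
    have : 0 < (2 * Real.sin x / (1 + α) ^ 2) * tt a x ^ (4 * α + 1) * (2 * Real.sin (a * x)) := by
      positivity
    intro h
    linarith
  · right
    have hd2 : dd a x ^ 2 - 1 ≠ 0 := by
      intro h
      apply hd
      nlinarith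
    refine ⟨by positivity, ?_⟩
    have hpow : tt a x ^ (4 * α + 1) = tt a x ^ (2 * α + 1) * tt a x ^ α * tt a x ^ α := by
      rw [← Real.rpow_add hT, ← Real.rpow_add hT]; ring_nf
    have hR : 2 * Real.sin x / (1 + α) ^ 2 * tt a x ^ (4 * α + 1) *
        ((dd a x ^ 2 - 1) * Real.cos (a * x) - 2 * dd a x * Real.sin (a * x)) /
        (2 * Real.sin ((1 - a) * x) / (1 + α) * tt a x ^ (2 * α + 1) * (dd a x ^ 2 - 1) *
        (tt a x ^ α * (Real.sin x / ((1 + α) * Real.sin ((1 - a) * x))))) =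
        tt a x ^ α * qq a x := by
      rw [hpow]
      have hq : qq a x = ((dd a x ^ 2 - 1) * Real.cos (a * x) - 2 * dd a x * Real.sin (a * x)) /
          (dd a x ^ 2 - 1) := by
        unfold qq
        have : 1 - dd a x ^ 2 ≠ 0 := fun h => hd2 (by linarith)
        rw [eq_div_iff hd2, add_mul, div_mul_eq_mul_div, mul_comm (Real.cos (a * x)),
          sub_eq_add_neg]
        congr 1
        rw [div_eq_iff this]
        ring
      rw [hq]
      generalize tt a x ^ α = P at *
      generalize tt a x ^ (2 * α + 1) = Q at *
      generalize ((dd a x ^ 2 - 1) * Real.cos (a * x) - 2 * dd a x * Real.sin (a * x)) = N at *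
      field_simp
    rw [hR]
    rintro ⟨hl, hu⟩
    rcases lt_or_gt_of_ne hd with h | h
    · have := rr_ge ha ha1 hα0.le hαa hx h
      linarith
    · have hq : qq a x ≤ 0 := by
        unfold qq
        have hcos : Real.cos (a * x) * dd a x ≤ Real.sin (a * x) := by
          have : dd a x * (Real.cos (a * x) / Real.sin (a * x))
            = Real.cos (a * x) * dd a x / Real.sin (a * x) := by ring
          rwa [this, div_le_one hA] at hc
        have hneg : 0 < dd a x ^ 2 - 1 := by nlinarith
        have e : 2 * dd a x * Real.sin (a * x) / (1 - dd a x ^ 2)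
          = -(2 * dd a x * Real.sin (a * x) / (dd a x ^ 2 - 1)) := by
          rw [← div_neg]; ring_nf
        rw [e]
        have : Real.cos (a * x) ≤ 2 * dd a x * Real.sin (a * x) / (dd a x ^ 2 - 1) := by
          rw [le_div_iff₀ hneg]
          rcases le_total (Real.cos (a * x)) 0 with hc0 | hc0
          · have : 0 ≤ 2 * dd a x * Real.sin (a * x) := by positivity
            have h4 := mul_nonpos_of_nonpos_of_nonneg hc0 hneg.le
            linarith
          · have := mul_le_mul_of_nonneg_left hcos h0
            have h3 : 0 ≤ dd a x * Real.sin (a * x) := mul_nonneg h0 hA.le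
            linarith
        linarith
      have := mul_nonpos_of_nonneg_of_nonpos hP3.le hq
      linarith
end

section
/- Fix a real α with 0 < α < 1. For φ ∈ (0, π) define u(φ) := [2·sin((π−φ)/(1+α))/(1+α)] · Θ_{1/α}(φ)^{2α+1} · (d(φ)² − 1), w(φ) := [2·sin φ/(1+α)²] · Θ_{1/α}(φ)^{4α+1} · [ (d(φ)² − 1)·cos((π−φ)/(1+1/α)) − 2·d(φ)·sin((π−φ)/(1+1/α)) ], and s(φ) := Θ_{1/α}(φ)^α · Θ_α(φ). Then there exists ε₀ > 0 such that for every φ ∈ (0, ε₀): u(φ) > 0 and 0 < w(φ)/(u(φ)·s(φ)) < 1. -/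
open Real Set

theorem stmt19 (α : ℝ) (hα0 : 0 < α) (hα1 : α < 1) :
    ∃ ε₀ > 0, ∀ φ ∈ Set.Ioo (0:ℝ) ε₀,
      0 < ufun α φ ∧ wfun α φ / (ufun α φ * sfun α φ) ∈ Set.Ioo (0:ℝ) 1 := by
  have hA0 : 0 < Real.sin ((Real.pi - 0) / (1 + α)) := by
    have := Real.pi_pos
    apply Real.sin_pos_of_pos_of_lt_pi
    · positivity
    · rw [div_lt_iff₀ (by positivity)]; nlinarith
  have hi : 1 < 1 / α := by rw [lt_div_iff₀ hα0]; linarith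
  have hB1 : 0 < (Real.pi - 0) / (1 + 1/α) := by
    have := Real.pi_pos
    rw [sub_zero]; positivity
  have hB2 : (Real.pi - 0) / (1 + 1/α) < Real.pi / 2 := by
    have := Real.pi_pos
    rw [div_lt_iff₀ (by positivity)]; nlinarith
  have hB0 : 0 < Real.sin ((Real.pi - 0) / (1 + 1/α)) :=
    Real.sin_pos_of_pos_of_lt_pi hB1 (by linarith [Real.pi_pos])
  have hC0 : 0 < Real.cos ((Real.pi - 0) / (1 + 1/α)) :=
    Real.cos_pos_of_mem_Ioo ⟨by linarith [Real.pi_pos], hB2⟩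
  obtain ⟨c, hc0, hc⟩ := exists_between hC0
  have e1 : ∀ᶠ φ in nhds (0:ℝ), 0 < Real.sin ((Real.pi - φ) / (1 + α)) :=
    ContinuousAt.eventually_lt (by fun_prop) (by fun_prop) hA0
  have e2 : ∀ᶠ φ in nhds (0:ℝ), 0 < Real.sin ((Real.pi - φ) / (1 + 1/α)) :=
    ContinuousAt.eventually_lt (by fun_prop) (by fun_prop) hB0
  have e3 : ∀ᶠ φ in nhds (0:ℝ), c < Real.cos ((Real.pi - φ) / (1 + 1/α)) :=
    ContinuousAt.eventually_lt (by fun_prop) (by fun_prop) hc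
  have e4 : ∀ᶠ φ in nhds (0:ℝ),
      Real.sin φ < (1 + 1/α) * Real.sin ((Real.pi - φ) / (1 + 1/α)) :=
    ContinuousAt.eventually_lt (by fun_prop) (by fun_prop)
      (by rw [Real.sin_zero]; positivity)
  have e5 : ∀ᶠ φ in nhds (0:ℝ), (1 + 3 / c) * Real.sin φ < Real.cos φ :=
    ContinuousAt.eventually_lt (by fun_prop) (by fun_prop) (by simp)
  obtain ⟨ε, hε, H⟩ := Metric.eventually_nhds_iff.mp (e1.and (e2.and (e3.and (e4.and e5))))
  refine ⟨min ε 1, by positivity, ?_⟩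
  rintro φ ⟨h0, h1⟩
  obtain ⟨hA, hB, hC, hT, hcot⟩ := H (y := φ) (by
    rw [Real.dist_eq, sub_zero, abs_of_pos h0]; exact lt_of_lt_of_le h1 (min_le_left _ _))
  have hs : 0 < Real.sin φ := Real.sin_pos_of_pos_of_lt_pi h0
    (by linarith [Real.pi_gt_three, min_le_right ε 1])
  have hd : 1 + 3 / c < dfun α φ := by
    unfold dfun
    rw [Real.cot_eq_cos_div_sin, Real.cot_eq_cos_div_sin]
    have k1 : 1 + 3 / c < Real.cos φ / Real.sin φ := by rwa [lt_div_iff₀ hs]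
    have k2 : 0 < Real.cos ((Real.pi - φ) / (1 + 1/α)) / Real.sin ((Real.pi - φ) / (1 + 1/α)) :=
      div_pos (hc0.trans hC) hB
    have k3 : 0 < 3 / c := by positivity
    nlinarith [mul_pos hα0 k2, mul_pos hα0 (k3.trans (by linarith : 3 / c < Real.cos φ / Real.sin φ))]
  have hT0 : 0 < Th (1/α) φ := by unfold Th; positivity
  have hT1 : Th (1/α) φ < 1 := by
    unfold Th; rw [div_lt_one (by positivity)]; exact hT
  have hS1 := Real.sin_le_one ((Real.pi - φ) / (1 + 1/α))
  have hC1 := Real.cos_le_one ((Real.pi - φ) / (1 + 1/α))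
  unfold ufun wfun sfun
  have hTa : Th α φ = Real.sin φ / ((1 + α) * Real.sin ((Real.pi - φ) / (1 + α))) := rfl
  rw [hTa]
  have r1 : Th (1/α) φ ^ (4*α+1) = Th (1/α) φ ^ (2*α+1) * Th (1/α) φ ^ α * Th (1/α) φ ^ α := by
    rw [← Real.rpow_add hT0, ← Real.rpow_add hT0]; congr 1; ring
  rw [r1]
  have p1 : 0 < Th (1/α) φ ^ (2*α+1) := Real.rpow_pos_of_pos hT0 _
  have p2 : 0 < Th (1/α) φ ^ α := Real.rpow_pos_of_pos hT0 _
  have p3 : Th (1/α) φ ^ α < 1 := Real.rpow_lt_one hT0.le hT1 hα0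
  generalize Th (1/α) φ ^ (2*α+1) = P at *
  generalize Th (1/α) φ ^ α = Q at *
  generalize dfun α φ = d at *
  generalize Real.sin ((Real.pi - φ) / (1 + α)) = a at *
  generalize Real.sin ((Real.pi - φ) / (1 + 1/α)) = b at *
  generalize Real.cos ((Real.pi - φ) / (1 + 1/α)) = g at *
  generalize Real.sin φ = σ at *
  have k3 : 0 < 3 / c := by positivity
  have hd1 : 1 < d := by linarith
  have hD : 0 < d^2 - 1 := by nlinarith
  have hdc : 3 < d * c := by rw [← div_lt_iff₀ hc0]; linarith
  have hdg : 3 < d * g := by nlinarith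
  have hbr : 0 < (d^2 - 1) * g - 2 * d * b := by
    nlinarith [mul_pos (by linarith : 0 < d) (by linarith : 0 < d * g - 2 * b - 1)]
  refine ⟨by positivity, ?_⟩
  have key : 2 * σ / (1 + α) ^ 2 * (P * Q * Q) * ((d ^ 2 - 1) * g - 2 * d * b) /
      (2 * a / (1 + α) * P * (d ^ 2 - 1) * (Q * (σ / ((1 + α) * a)))) =
      Q * (((d ^ 2 - 1) * g - 2 * d * b) / (d^2 - 1)) := by
    have : 1 + α ≠ 0 := by positivity
    have := hD.ne'
    field_simp
  rw [key]
  have hlt : ((d ^ 2 - 1) * g - 2 * d * b) / (d^2 - 1) < 1 := by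
    rw [div_lt_one hD]
    nlinarith [mul_pos (by linarith : 0 < d) hB]
  have hgt : 0 < ((d ^ 2 - 1) * g - 2 * d * b) / (d^2 - 1) := div_pos hbr hD
  exact ⟨mul_pos p2 hgt, by nlinarith⟩
end
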